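/- arXiv:2507.13988 — 3 statements merged into one kernel-verified Lean document; each statement's English description precedes it below -/
import Mathlib

section
/- Let (R, m, k) be a Noetherian local ring. If Tor^R_i(k, k) = 0 for all sufficiently large i, then R is a regular local ring. -/
/-!
Write `pd` for projective dimension and `k` for the residue field of `R`.

**Tor vanishing gives `pd k < ∞`.** Take a resolution of `k` by finite free modules `Fₙ`, with
syzygies `Zₙ`, so that `Fₙ → Zₙ` is onto with kernel `Zₙ₊₁`. If `Tor_{n+1}(k, k) = 0`, then
`k ⊗ Fₙ₊₂ → k ⊗ Fₙ₊₁ → k ⊗ Fₙ` is exact, which forces `k ⊗ Zₙ₊₁ → k ⊗ Fₙ` to be injective; over a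
local ring this makes `Zₙ` free (`free_syzygy`). Hence `pd k ≤ n`
(`hasProjectiveDimensionLT_of_isZero_tor`). The resolution need not be minimal, and a single
vanishing Tor in positive degree is enough.

**`pd k < ∞` gives regularity** (`isRegularLocal_of_pd`), by induction on `dim R`. By prime
avoidance one of two cases occurs (`exists_socle_or_regular`).

* Some `y ≠ 0` is killed by the maximal ideal `𝔪`. The kernel of a minimal free cover lies in
  `𝔪 F`, so `y` kills it; as a nonzero free module is faithful, every finite module of finite
  projective dimension is projective (`projective_of_pd_of_socle`). So `k` is free and `𝔪 = 0`.
* Some `x ∈ 𝔪 ∖ 𝔪²` is a nonzerodivisor. Then `pd 𝔪 < ∞`, and reducing modulo `x` gives a finite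
  projective dimension to `𝔪 / x𝔪` over `R / x` (`pd_quotient_tensor`). Since `x ∉ 𝔪²`, the residue
  field is a direct summand of `𝔪 / x𝔪`, spanned by the class of `x`
  (`pd_residueField_quotient`). By induction `R / x` is regular, and therefore so is `R`.

The predicate `HasProjectiveDimensionLT M n` says `pd M < n`; for `n = 0` it says `M = 0`.
-/

open CategoryTheory IsLocalRing

/-- A Noetherian local ring is regular if its maximal ideal can be generated by
`dim R` elements. -/
def IsRegularLocal (R : Type) [CommRing R] [IsLocalRing R] : Prop :=
  IsNoetherianRing R ∧
  ∃ (n : ℕ) (f : Fin n → R),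
    Ideal.span (Set.range f) = IsLocalRing.maximalIdeal R ∧ ringKrullDim R = n

section

open TensorProduct

/-! ### Projective dimension of modules -/

/-- Dimension shifting along a short exact sequence `0 → K → F → M → 0` with `F` projective. -/
theorem pd_iff_of_exact {R : Type} [CommRing R] {K F M : Type} [AddCommGroup K] [Module R K]
    [AddCommGroup F] [Module R F] [AddCommGroup M] [Module R M] [Module.Projective R F]
    {g : K →ₗ[R] F} {f : F →ₗ[R] M} (hg : Function.Injective g)
    (hex : Function.Exact g f) (hf : Function.Surjective f) (n : ℕ) :
    HasProjectiveDimensionLT (ModuleCat.of R M) (n + 2) ↔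
      HasProjectiveDimensionLT (ModuleCat.of R K) (n + 1) := by
  have hS : (ShortComplex.mk (ModuleCat.ofHom g) (ModuleCat.ofHom f) (by
      rw [← ModuleCat.ofHom_comp, hex.linearMap_comp_eq_zero]; rfl)).ShortExact :=
    { exact := (ShortComplex.ShortExact.moduleCat_exact_iff_function_exact _).mpr hex
      mono_f := (ModuleCat.mono_iff_injective _).mpr hg
      epi_g := (ModuleCat.epi_iff_surjective _).mpr hf }
  exact hS.hasProjectiveDimensionLT_X₃_iff n
    (ModuleCat.projective_of_categoryTheory_projective _)

theorem pd_ker_iff {R : Type} [CommRing R]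
    {F M : Type} [AddCommGroup F] [Module R F] [AddCommGroup M] [Module R M]
    [Module.Projective R F] {f : F →ₗ[R] M} (hf : Function.Surjective f) (n : ℕ) :
    HasProjectiveDimensionLT (ModuleCat.of R M) (n + 2) ↔
      HasProjectiveDimensionLT (ModuleCat.of R (LinearMap.ker f)) (n + 1) :=
  pd_iff_of_exact (Submodule.subtype_injective _) (LinearMap.exact_subtype_ker_map f) hf n

theorem projective_iff_pd {R : Type} [CommRing R] {M : Type} [AddCommGroup M] [Module R M] :
    HasProjectiveDimensionLT (ModuleCat.of R M) 1 ↔ Module.Projective R M := by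
  rw [IsProjective.iff_projective, projective_iff_hasProjectiveDimensionLT_one]

theorem subsingleton_of_pd_zero {R : Type} [CommRing R] {M : Type} [AddCommGroup M] [Module R M]
    (h : HasProjectiveDimensionLT (ModuleCat.of R M) 0) : Subsingleton M := by
  rw [hasProjectiveDimensionLT_zero_iff_isZero] at h
  exact ModuleCat.isZero_iff_subsingleton.mp h

/-! ### Local rings with nonzero socle -/

/-- A basis of `k ⊗ M` lifts, by Nakayama, to generators of `M`, and every relation among these
has its coefficients in the maximal ideal. -/
theorem exists_minimal_cover (R : Type) [CommRing R] [IsLocalRing R] (M : Type) [AddCommGroup M]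
    [Module R M] [Module.Finite R M] :
    ∃ (n : ℕ) (f : (Fin n →₀ R) →ₗ[R] M), Function.Surjective f ∧
      ∀ c, f c = 0 → ∀ i, c i ∈ maximalIdeal R := by
  let w := Module.finBasis (ResidueField R) (ResidueField R ⊗[R] M)
  choose v hv using fun i ↦
    TensorProduct.mk_surjective R M (ResidueField R) Ideal.Quotient.mk_surjective (w i)
  refine ⟨_, Finsupp.linearCombination R v, ?_, fun c hc i ↦ ?_⟩
  · rw [← LinearMap.range_eq_top, Finsupp.range_linearCombination]
    exact span_eq_top_of_tmul_eq_basis v w hv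
  · have h0 : ∑ j, (residue R (c j)) • w j = 0 := by
      have := congrArg (TensorProduct.mk R (ResidueField R) M 1) hc
      rw [Finsupp.linearCombination_apply, Finsupp.sum_fintype _ _ (by simp), map_sum,
        map_zero] at this
      rw [← this]
      refine Finset.sum_congr rfl fun j _ ↦ ?_
      rw [map_smul, hv]
      exact (algebraMap_smul (ResidueField R) (c j) (w j))
    have := Fintype.linearIndependent_iff.mp w.linearIndependent _ h0 i
    exact Ideal.Quotient.eq_zero_iff_mem.mp this

theorem subsingleton_of_free_of_smul_eq_zero {R : Type} [CommRing R] {M : Type} [AddCommGroup M]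
    [Module R M] [Module.Free R M] {y : R} (hy : y ≠ 0) (h : ∀ c : M, y • c = 0) :
    Subsingleton M := by
  by_contra! hnt
  have := Module.mem_annihilator.mpr h
  rw [Module.annihilator_eq_bot.mpr inferInstance] at this
  exact hy this

/-- If a nonzero element is killed by the maximal ideal, then every finite module of finite
projective dimension is projective: the first syzygy for a minimal cover is free by induction and
is killed by `y`, so it vanishes. -/
theorem projective_of_pd_of_socle {R : Type} [CommRing R] [IsLocalRing R] [IsNoetherianRing R]
    {y : R} (hy : y ≠ 0) (hmy : ∀ a ∈ maximalIdeal R, y * a = 0) (n : ℕ) :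
    ∀ (M : Type) [AddCommGroup M] [Module R M] [Module.Finite R M],
      HasProjectiveDimensionLT (ModuleCat.of R M) n → Module.Projective R M := by
  induction n with
  | zero =>
    intro M _ _ _ h
    have := subsingleton_of_pd_zero h
    infer_instance
  | succ n ih =>
    intro M _ _ _ h
    obtain _ | n := n
    · exact projective_iff_pd.mp h
    obtain ⟨d, f, hf, hmin⟩ := exists_minimal_cover R M
    have hK := ih (LinearMap.ker f) ((pd_ker_iff hf n).mp h)
    have hfin : Module.Finite R (LinearMap.ker f) := inferInstance
    have hfl : Module.Flat R (LinearMap.ker f) := inferInstance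
    have : Module.Free R (LinearMap.ker f) :=
      Module.free_of_flat_of_isLocalRing (R := R) (P := LinearMap.ker f)
    have hann : ∀ c : LinearMap.ker f, y • c = 0 := fun c ↦
      Subtype.ext (Finsupp.ext fun i ↦ hmy _ (hmin c c.2 i))
    have hsub : Subsingleton (LinearMap.ker f) := subsingleton_of_free_of_smul_eq_zero hy hann
    have hinj : Function.Injective f :=
      LinearMap.ker_eq_bot.mp ((Submodule.subsingleton_iff_eq_bot).mp hsub)
    exact Module.Projective.of_equiv (LinearEquiv.ofBijective f ⟨hinj, hf⟩)

/-! ### Reduction modulo a nonzerodivisor -/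

/-- If `x` is regular on `M`, then `0 → K → F → M → 0` stays exact on the left modulo `x`, that is,
`Tor₁(R / x, M) = 0`. No flatness of `F` is needed: only the injectivity of multiplication by `x`
on `M` and of `R ⊗ K → R ⊗ F` enters. -/
theorem lTensor_quotient_injective {R : Type} [CommRing R] {x : R} {K F M : Type}
    [AddCommGroup K] [Module R K] [AddCommGroup F] [Module R F] [AddCommGroup M] [Module R M]
    {g : K →ₗ[R] F} {f : F →ₗ[R] M} (hg : Function.Injective g)
    (hex : Function.Exact g f) (hf : Function.Surjective f) (hx : IsSMulRegular M x) :
    Function.Injective (g.lTensor (R ⧸ Ideal.span {x})) := by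
  refine lTensor_injective_of_exact_of_exact_of_rTensor_injective
    (f₁ := LinearMap.lsmul R R x) (f₂ := (Ideal.span {x}).mkQ) ?_ (Submodule.mkQ_surjective _)
    hex hf ?_ (Module.Flat.lTensor_preserves_injective_linearMap g hg)
  · intro a
    rw [Submodule.mkQ_apply, Submodule.Quotient.mk_eq_zero, Ideal.mem_span_singleton']
    simp [mul_comm x]
  · have : (LinearMap.lsmul R R x).rTensor M =
        (TensorProduct.lid R M).symm.toLinearMap ∘ₗ LinearMap.lsmul R M x ∘ₗ
          (TensorProduct.lid R M).toLinearMap := by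
      ext; simp [TensorProduct.smul_tmul']
    rw [this]
    simpa using! hx

theorem pd_quotient_tensor_iff {R : Type} [CommRing R] {x : R} {K F M : Type}
    [AddCommGroup K] [Module R K] [AddCommGroup F] [Module R F] [AddCommGroup M] [Module R M]
    [Module.Projective R F]
    {g : K →ₗ[R] F} {f : F →ₗ[R] M} (hg : Function.Injective g)
    (hex : Function.Exact g f) (hf : Function.Surjective f) (hx : IsSMulRegular M x) (n : ℕ) :
    HasProjectiveDimensionLT
        (ModuleCat.of (R ⧸ Ideal.span {x}) ((R ⧸ Ideal.span {x}) ⊗[R] M)) (n + 2) ↔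
      HasProjectiveDimensionLT
        (ModuleCat.of (R ⧸ Ideal.span {x}) ((R ⧸ Ideal.span {x}) ⊗[R] K)) (n + 1) :=
  pd_iff_of_exact (R := R ⧸ Ideal.span {x})
    (g := g.baseChange (R ⧸ Ideal.span {x})) (f := f.baseChange (R ⧸ Ideal.span {x}))
    (lTensor_quotient_injective hg hex hf hx)
    (lTensor_exact _ hex hf) (LinearMap.lTensor_surjective _ hf) n

/-- Reducing modulo `x` does not increase the projective dimension of a module on which `x` is
regular, when `x` is also regular on `R`. Regularity on `R` makes `x` regular on free modules,
hence on the syzygies through which the induction runs. -/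
theorem pd_quotient_tensor {R : Type} [CommRing R] {x : R} (hxR : IsSMulRegular R x) (n : ℕ) :
    ∀ (M : Type) [AddCommGroup M] [Module R M], IsSMulRegular M x →
      HasProjectiveDimensionLT (ModuleCat.of R M) n →
      HasProjectiveDimensionLT
        (ModuleCat.of (R ⧸ Ideal.span {x}) ((R ⧸ Ideal.span {x}) ⊗[R] M)) n := by
  induction n with
  | zero =>
    intro M _ _ _ h
    have := subsingleton_of_pd_zero h
    rw [hasProjectiveDimensionLT_zero_iff_isZero]
    exact ModuleCat.isZero_of_subsingleton _
  | succ n ih =>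
    intro M _ _ hxM h
    obtain _ | n := n
    · have := projective_iff_pd.mp h
      exact projective_iff_pd.mpr inferInstance
    let f : (M →₀ R) →ₗ[R] M := Finsupp.linearCombination R id
    have hf : Function.Surjective f := Finsupp.linearCombination_id_surjective R M
    have hxF : IsSMulRegular (M →₀ R) x := fun a b hab ↦
      Finsupp.ext fun i ↦ hxR (DFunLike.congr_fun hab i)
    have hxK : IsSMulRegular (LinearMap.ker f) x := fun a b hab ↦
      Subtype.ext (hxF (congrArg Subtype.val hab))
    have hK := ih (LinearMap.ker f) hxK ((pd_ker_iff hf n).mp h)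
    exact (pd_quotient_tensor_iff (Submodule.subtype_injective _)
      (LinearMap.exact_subtype_ker_map f) hf hxM n).mpr hK

/-- An element of `𝔪 ∖ 𝔪²` is nonzero in the cotangent space `𝔪 / 𝔪²`, so some `R`-linear functional
`𝔪 → k` takes the value `1` on it. -/
theorem exists_functional {R : Type} [CommRing R] [IsLocalRing R] {x : R}
    (hx : x ∈ maximalIdeal R) (hx2 : x ∉ maximalIdeal R ^ 2) :
    ∃ φ : maximalIdeal R →ₗ[R] ResidueField R, φ ⟨x, hx⟩ = 1 := by
  have hne : (maximalIdeal R).toCotangent ⟨x, hx⟩ ≠ 0 := by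
    rwa [Ne, Ideal.toCotangent_eq_zero]
  obtain ⟨φ, hφ⟩ := Module.Projective.exists_dual_ne_zero (ResidueField R)
    (V := CotangentSpace R) hne
  let ψ : CotangentSpace R →ₗ[ResidueField R] ResidueField R :=
    (φ ((maximalIdeal R).toCotangent ⟨x, hx⟩))⁻¹ • φ
  exact ⟨ψ.restrictScalars R ∘ₗ (maximalIdeal R).toCotangent, inv_mul_cancel₀ hφ⟩

/-- If `pd k < n` then `pd 𝔪 < n + 1`. This bound is not sharp, but it needs no special treatment of
small `n`, and only finiteness matters. -/
theorem pd_maximalIdeal {R : Type} [CommRing R] [IsLocalRing R] {n : ℕ}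
    (h : HasProjectiveDimensionLT (ModuleCat.of R (ResidueField R)) n) :
    HasProjectiveDimensionLT (ModuleCat.of R (maximalIdeal R)) (n + 1) := by
  refine (pd_iff_of_exact (g := (maximalIdeal R).subtype)
    (f := Algebra.linearMap R (ResidueField R)) (Submodule.subtype_injective _) ?_
    residue_surjective n).mp (hasProjectiveDimensionLT_of_ge _ n (n + 2) (by omega))
  intro a
  simp [ResidueField.algebraMap_eq]

/-- For a nonzerodivisor `x ∈ 𝔪 ∖ 𝔪²`, the residue field of `S = R / x` is a retract of the
`S`-module `S ⊗ 𝔪`, so its projective dimension over `S` is finite. -/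
theorem pd_residueField_quotient {R : Type} [CommRing R] [IsLocalRing R] {x : R}
    (hx : x ∈ maximalIdeal R) (hx2 : x ∉ maximalIdeal R ^ 2) (hxR : IsSMulRegular R x)
    [IsLocalRing (R ⧸ Ideal.span {x})] {n : ℕ}
    (h : HasProjectiveDimensionLT (ModuleCat.of R (ResidueField R)) n) :
    HasProjectiveDimensionLT
      (ModuleCat.of (R ⧸ Ideal.span {x}) (ResidueField (R ⧸ Ideal.span {x}))) (n + 1) := by
  have hxm : IsSMulRegular (maximalIdeal R) x := fun a b hab ↦
    Subtype.ext (hxR (congrArg Subtype.val hab))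
  have hm := pd_quotient_tensor hxR (n + 1) _ hxm (pd_maximalIdeal h)
  obtain ⟨φ, hφ⟩ := exists_functional hx hx2
  let S := R ⧸ Ideal.span {x}
  have hloc : IsLocalHom (algebraMap R S) :=
    IsLocalHom.of_surjective _ Ideal.Quotient.mk_surjective
  let j : ResidueField R →ₗ[R] ResidueField S :=
    { toFun := ResidueField.map (algebraMap R S)
      map_add' := map_add _
      map_smul' := fun a b ↦ by
        simp only [Algebra.smul_def, map_mul, RingHom.id_apply]
        rfl }
  -- The retraction is induced by a functional `𝔪 → k` which is `1` at `x`.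
  let r : S ⊗[R] maximalIdeal R →ₗ[S] ResidueField S := TensorProduct.AlgebraTensorModule.lift
    { toFun := fun s ↦ s • (j ∘ₗ φ)
      map_add' := fun a b ↦ add_smul _ _ _
      map_smul' := fun a b ↦ smul_assoc _ _ _ }
  have hr : r (1 ⊗ₜ ⟨x, hx⟩) = 1 := by
    have : r (1 ⊗ₜ ⟨x, hx⟩) = (1 : S) • j (φ ⟨x, hx⟩) := rfl
    rw [this, hφ, one_smul]
    exact map_one (ResidueField.map (algebraMap R S))
  -- The section sends `1` to the class of `x`; it is well defined since for `a ∈ 𝔪` the element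
  -- `a x = x a` lies in `x 𝔪` and so vanishes in `S ⊗ 𝔪`.
  let s : ResidueField S →ₗ[S] S ⊗[R] maximalIdeal R :=
    (maximalIdeal S).liftQ (LinearMap.toSpanSingleton S _ (1 ⊗ₜ ⟨x, hx⟩)) (by
      intro a ha
      obtain ⟨a, rfl⟩ := Ideal.Quotient.mk_surjective a
      have ha' : a ∈ maximalIdeal R := by
        rw [mem_maximalIdeal, mem_nonunits_iff] at ha ⊢
        exact fun hu ↦ ha (hu.map (Ideal.Quotient.mk (Ideal.span {x})))
      have h1 : (⟨a * x, Ideal.mul_mem_left _ a hx⟩ : maximalIdeal R) = x • ⟨a, ha'⟩ :=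
        Subtype.ext (mul_comm a x)
      have h2 : (a • ⟨x, hx⟩ : maximalIdeal R) = x • ⟨a, ha'⟩ := h1
      have h3 : (x • (1 : S)) = 0 := by
        rw [Algebra.smul_def, mul_one]
        exact Ideal.Quotient.eq_zero_iff_mem.mpr (Ideal.mem_span_singleton_self x)
      rw [LinearMap.mem_ker, LinearMap.toSpanSingleton_apply]
      change algebraMap R S a • ((1 : S) ⊗ₜ[R] (⟨x, hx⟩ : maximalIdeal R)) = 0
      rw [algebraMap_smul, ← TensorProduct.tmul_smul, h2, ← TensorProduct.smul_tmul, h3,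
        TensorProduct.zero_tmul])
  have hrs : r ∘ₗ s = LinearMap.id := by
    refine LinearMap.ext fun b ↦ ?_
    obtain ⟨b, rfl⟩ := residue_surjective b
    have : s (residue S b) = b • (1 ⊗ₜ ⟨x, hx⟩) := rfl
    rw [LinearMap.comp_apply, this, map_smul, hr, LinearMap.id_apply, Algebra.smul_def, mul_one]
    rfl
  let ret : Retract (ModuleCat.of S (ResidueField S)) (ModuleCat.of S (S ⊗[R] maximalIdeal R)) :=
    { i := ModuleCat.ofHom s
      r := ModuleCat.ofHom r
      retract := by rw [← ModuleCat.ofHom_comp, hrs]; rfl }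
  exact ret.hasProjectiveDimensionLT (n + 1)

/-- Either the maximal ideal `𝔪` is an associated prime of `R`, or prime avoidance applied to the
associated primes together with `𝔪²` yields a nonzerodivisor in `𝔪 ∖ 𝔪²`. -/
theorem exists_socle_or_regular (R : Type) [CommRing R] [IsLocalRing R] [IsNoetherianRing R] :
    (∃ y : R, y ≠ 0 ∧ ∀ a ∈ maximalIdeal R, y * a = 0) ∨
    ∃ x ∈ maximalIdeal R, x ∉ maximalIdeal R ^ 2 ∧ IsSMulRegular R x := by
  by_cases hass : maximalIdeal R ∈ associatedPrimes R R
  · left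
    obtain ⟨-, y, hy⟩ := isAssociatedPrime_iff.mp (AssociatedPrimes.mem_iff.mp hass)
    refine ⟨y, ?_, fun a ha ↦ ?_⟩
    · rintro rfl
      exact (maximalIdeal.isMaximal R).ne_top (by rw [hy]; simp)
    · rw [hy] at ha
      simpa [Submodule.mem_colon_singleton, mul_comm] using ha
  · right
    by_contra! hcon
    have hfin := associatedPrimes.finite R R
    classical
    have hsub : (maximalIdeal R : Set R) ⊆
        ⋃ I ∈ (↑(insert (maximalIdeal R ^ 2) hfin.toFinset) : Set (Ideal R)), (I : Set R) := by
      intro x hx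
      by_cases hx2 : x ∈ maximalIdeal R ^ 2
      · exact Set.mem_biUnion (by simp) hx2
      · have hreg := hcon x hx hx2
        have : x ∈ ⋃ p ∈ associatedPrimes R R, (p : Set R) := by
          rw [biUnion_associatedPrimes_eq_compl_regular]
          exact hreg
        obtain ⟨p, hp, hxp⟩ := Set.mem_iUnion₂.mp this
        exact Set.mem_biUnion (by simp [hp]) hxp
    -- Prime avoidance tolerates the possibly non-prime ideal `𝔪²` as the exceptional member.
    obtain ⟨I, hI, hle⟩ := (Ideal.subset_union_prime (f := id) (maximalIdeal R ^ 2)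
      (maximalIdeal R ^ 2) (by
        intro I hI h1 _
        rcases Finset.mem_insert.mp hI with h | h
        · exact absurd h h1
        · exact ((hfin.mem_toFinset).mp h).isPrime)).mp hsub
    -- If `𝔪 ≤ 𝔪²`, then `𝔪 = 0` by Nakayama, and `𝔪` is the annihilator of `1`.
    rcases Finset.mem_insert.mp hI with rfl | h
    · have hbot : maximalIdeal R = ⊥ := by
        refine Submodule.eq_bot_of_le_smul_of_le_jacobson_bot (maximalIdeal R) _
          (IsNoetherian.noetherian _) ?_ (maximalIdeal_le_jacobson _)
        rw [smul_eq_mul, ← pow_two]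
        exact hle
      refine hass (AssociatedPrimes.mem_iff.mpr (isAssociatedPrime_iff.mpr
        ⟨inferInstance, 1, ?_⟩))
      rw [hbot]
      ext a
      simp [Submodule.mem_colon_singleton]
    · have hp := (hfin.mem_toFinset).mp h
      have : I = maximalIdeal R :=
        le_antisymm (le_maximalIdeal hp.isPrime.ne_top) hle
      exact hass (this ▸ hp)

/-! ### Finite projective dimension implies regularity -/

theorem isRegularLocal_of_maximalIdeal_eq_bot {R : Type} [CommRing R] [IsLocalRing R]
    [IsNoetherianRing R] (h : maximalIdeal R = ⊥) : IsRegularLocal R := by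
  refine ⟨inferInstance, 0, Fin.elim0, by simp [h], ?_⟩
  exact ringKrullDim_eq_zero_of_isField (isField_iff_maximalIdeal_eq.mpr h)

/-- Generators of the maximal ideal of `R / x`, lifted to `R`, generate the maximal ideal of `R`
together with `x`, and `dim R = dim R / x + 1` as `x` is a nonzerodivisor. -/
theorem isRegularLocal_of_quotient {R : Type} [CommRing R] [IsLocalRing R] [IsNoetherianRing R]
    {x : R} (hx : x ∈ maximalIdeal R) (hxR : IsSMulRegular R x)
    [IsLocalRing (R ⧸ Ideal.span {x})] (h : IsRegularLocal (R ⧸ Ideal.span {x})) :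
    IsRegularLocal R := by
  obtain ⟨-, n, f, hf, hdim⟩ := h
  choose g hg using fun i ↦ Ideal.Quotient.mk_surjective (f i)
  refine ⟨inferInstance, n + 1, Fin.cons x g, ?_, ?_⟩
  · have hmap : (Ideal.span (Set.range g)).map (Ideal.Quotient.mk (Ideal.span {x})) =
        maximalIdeal (R ⧸ Ideal.span {x}) := by
      rw [Ideal.map_span, ← Set.range_comp, ← hf]
      congr 2
      exact funext hg
    have hloc : IsLocalHom (Ideal.Quotient.mk (Ideal.span {x})) :=
      IsLocalHom.of_surjective _ Ideal.Quotient.mk_surjective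
    have hcomap := congrArg (Ideal.comap (Ideal.Quotient.mk (Ideal.span {x}))) hmap
    rw [Ideal.comap_map_of_surjective _ Ideal.Quotient.mk_surjective,
      maximalIdeal_comap, ← RingHom.ker_eq_comap_bot, Ideal.mk_ker] at hcomap
    rw [Fin.range_cons, Ideal.span_insert, sup_comm, hcomap]
  · rw [← ringKrullDim_quotient_span_singleton_succ_eq_ringKrullDim hxR hx, hdim]
    push_cast; rfl

/-- The induction is on a strict upper bound `d` for the dimension, so that the case `d = 0` is
vacuous. -/
theorem isRegularLocal_of_pd (d : ℕ) : ∀ (R : Type) [CommRing R] [IsLocalRing R]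
    [IsNoetherianRing R] (n : ℕ), ringKrullDim R + 1 ≤ d →
    HasProjectiveDimensionLT (ModuleCat.of R (ResidueField R)) n → IsRegularLocal R := by
  induction d with
  | zero =>
    intro R _ _ _ n hd _
    have h0 : (0 : WithBot ℕ∞) ≤ ringKrullDim R := ringKrullDim_nonneg_of_nontrivial
    have h1 : (1 : WithBot ℕ∞) ≤ 0 := by
      calc (1 : WithBot ℕ∞) = 0 + 1 := (zero_add 1).symm
        _ ≤ ringKrullDim R + 1 := by gcongr
        _ ≤ 0 := hd
    exact absurd h1 (by decide)
  | succ d ih =>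
    intro R _ _ _ n hd h
    obtain ⟨y, hy, hmy⟩ | ⟨x, hx, hx2, hxR⟩ := exists_socle_or_regular R
    -- With a nonzero socle, `k` is free; as `𝔪` kills it and it is nonzero, `𝔪 = 0`.
    · have := projective_of_pd_of_socle hy hmy n (ResidueField R) h
      have : Module.Free R (ResidueField R) :=
        Module.free_of_flat_of_isLocalRing (R := R) (P := ResidueField R)
      refine isRegularLocal_of_maximalIdeal_eq_bot ((Submodule.eq_bot_iff _).mpr fun a ha ↦ ?_)
      by_contra hne
      refine not_subsingleton (ResidueField R) (subsingleton_of_free_of_smul_eq_zero hne fun c ↦ ?_)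
      rw [Algebra.smul_def, ResidueField.algebraMap_eq, (residue_eq_zero_iff a).mpr ha, zero_mul]
    · have : Nontrivial (R ⧸ Ideal.span {x}) := Ideal.Quotient.nontrivial_iff.mpr
        fun htop ↦ (Ideal.span_singleton_eq_top.not.mpr hx) htop
      have : IsLocalRing (R ⧸ Ideal.span {x}) :=
        .of_surjective' (Ideal.Quotient.mk _) Ideal.Quotient.mk_surjective
      refine isRegularLocal_of_quotient hx hxR (ih _ (n + 1) ?_
        (pd_residueField_quotient hx hx2 hxR h))
      rw [← ringKrullDim_quotient_span_singleton_succ_eq_ringKrullDim hxR hx] at hd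
      rw [Nat.cast_succ] at hd
      exact ENat.WithBot.add_le_add_one_right_iff.mp hd

theorem isRegularLocal_of_hasProjectiveDimensionLT (R : Type) [CommRing R] [IsLocalRing R]
    [IsNoetherianRing R] (n : ℕ)
    (h : HasProjectiveDimensionLT (ModuleCat.of R (ResidueField R)) n) : IsRegularLocal R := by
  obtain ⟨d, hd⟩ : ∃ d : ℕ, ringKrullDim R = d := by
    have h0 : ringKrullDim R ≠ ⊥ := ringKrullDim_ne_bot
    have h1 : ringKrullDim R ≠ ⊤ := ringKrullDim_ne_top
    lift ringKrullDim R to ℕ∞ using h0 with e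
    lift e to ℕ using by simpa using h1
    exact ⟨e, rfl⟩
  exact isRegularLocal_of_pd (d + 1) R n (by rw [hd]; push_cast; rfl) h

/-! ### Free resolutions and vanishing of Tor -/

/-- Exactness is preserved by composing with an epimorphism on the left and a monomorphism on
the right. -/
theorem exact_comp_comp {C : Type*} [Category* C] [Abelian C] {X₁ X₂ X₃ Y₁ Y₃ : C}
    {f : X₁ ⟶ X₂} {g : X₂ ⟶ X₃} {w : f ≫ g = 0} (q : Y₁ ⟶ X₁) (j : X₃ ⟶ Y₃) [Epi q] [Mono j]
    (h : (ShortComplex.mk f g w).Exact) {a : Y₁ ⟶ X₂} {b : X₂ ⟶ Y₃} (ha : a = q ≫ f)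
    (hb : b = g ≫ j) (w' : a ≫ b = 0) : (ShortComplex.mk a b w').Exact := by
  subst ha hb
  let S : ShortComplex C := ShortComplex.mk (q ≫ f) g (by simp [w])
  let φ : S ⟶ ShortComplex.mk f g w := { τ₁ := q, τ₂ := 𝟙 _, τ₃ := 𝟙 _ }
  let ψ : S ⟶ ShortComplex.mk (q ≫ f) (g ≫ j) w' := { τ₁ := 𝟙 _, τ₂ := 𝟙 _, τ₃ := j }
  have : Epi φ.τ₁ := ‹Epi q›
  have : IsIso φ.τ₂ := inferInstanceAs (IsIso (𝟙 X₂))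
  have : Mono φ.τ₃ := inferInstanceAs (Mono (𝟙 X₃))
  have : Epi ψ.τ₁ := inferInstanceAs (Epi (𝟙 Y₁))
  have : IsIso ψ.τ₂ := inferInstanceAs (IsIso (𝟙 X₂))
  have : Mono ψ.τ₃ := ‹Mono j›
  exact (ShortComplex.exact_iff_of_epi_of_isIso_of_mono ψ).mp
    ((ShortComplex.exact_iff_of_epi_of_isIso_of_mono φ).mpr h)

/-- Splicing the short exact sequences `0 → Zₙ₊₁ → Kₙ → Zₙ → 0` with `Kₙ` projective gives a
projective resolution of `Z₀`. -/
theorem exists_resolution {C : Type*} [Category* C] [Abelian C] (K : ChainComplex C ℕ) {Z : ℕ → C}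
    (p : ∀ n, K.X n ⟶ Z n) (i : ∀ n, Z (n + 1) ⟶ K.X n) (w : ∀ n, i n ≫ p n = 0)
    (hd : ∀ n, K.d (n + 1) n = p (n + 1) ≫ i n)
    (hS : ∀ n, (ShortComplex.mk _ _ (w n)).ShortExact) (hK : ∀ n, Projective (K.X n)) :
    ∃ P : ProjectiveResolution (Z 0), P.complex = K := by
  have hp (n : ℕ) : Epi (p n) := (hS n).epi_g
  have hi (n : ℕ) : Mono (i n) := (hS n).mono_f
  have hd0 : K.d 1 0 ≫ p 0 = 0 := by
    rw [hd 0, Category.assoc, w, Limits.comp_zero]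
  let π : K ⟶ (ChainComplex.single₀ C).obj (Z 0) :=
    (ChainComplex.toSingle₀Equiv K (Z 0)).symm ⟨p 0, hd0⟩
  have hπ : QuasiIso π := ⟨fun n ↦ by
    cases n with
    | zero =>
      rw [ChainComplex.quasiIsoAt₀_iff, ShortComplex.quasiIso_iff_of_zeros']
      · refine (ShortComplex.exact_and_epi_g_iff_of_iso
          (S₂ := ShortComplex.mk (K.d 1 0) (p 0) hd0) ?_).2
          ⟨exact_comp_comp (p 1) (𝟙 (Z 0)) (hS 0).exact (hd 0) (by simp) _, hp 0⟩
        refine ShortComplex.isoMk (Iso.refl _) (Iso.refl _) (Iso.refl _) ?_ ?_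
        · exact (Category.id_comp _).trans (Category.comp_id _).symm
        · refine (Category.id_comp _).trans ((Category.comp_id _).trans ?_).symm
          exact ChainComplex.toSingle₀Equiv_symm_apply_f_zero _ _
      · exact K.shape 0 0 (by simp)
      all_goals rfl
    | succ n =>
      rw [quasiIsoAt_iff_exactAt']
      · rw [HomologicalComplex.exactAt_iff' _ (n + 1 + 1) (n + 1) n (by simp) (by simp)]
        exact exact_comp_comp (p (n + 2)) (i n) (hS (n + 1)).exact (hd _) (hd _) _
      · apply ChainComplex.exactAt_succ_single_obj⟩
  exact ⟨{ complex := K, projective := hK, π := π, quasiIso := hπ }, rfl⟩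

/-- A finite module over a Noetherian ring has a resolution by finite free modules, recorded as a
complex `K` together with its finite syzygies `Z` and the sequences `0 → Zₙ₊₁ → Kₙ → Zₙ → 0`. -/
theorem exists_syzygies {R : Type} [CommRing R] [IsNoetherianRing R] (M : ModuleCat.{0} R)
    [Module.Finite R M] : ∃ (K : ChainComplex (ModuleCat.{0} R) ℕ) (Z : ℕ → ModuleCat.{0} R)
      (p : ∀ n, K.X n ⟶ Z n) (i : ∀ n, Z (n + 1) ⟶ K.X n) (w : ∀ n, i n ≫ p n = 0), Z 0 = M ∧
      (∀ n, Module.Finite R (Z n)) ∧ (∀ n, Module.Finite R (K.X n)) ∧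
      (∀ n, Module.Free R (K.X n)) ∧ (∀ n, K.d (n + 1) n = p (n + 1) ≫ i n) ∧
      ∀ n, (ShortComplex.mk _ _ (w n)).ShortExact := by
  choose r f hf using fun N : {N : ModuleCat.{0} R // Module.Finite R N} ↦
    have := N.2
    Module.Finite.exists_fin' R N.1
  let s : {N : ModuleCat.{0} R // Module.Finite R N} → {N : ModuleCat.{0} R // Module.Finite R N} :=
    fun N ↦ ⟨ModuleCat.of R (LinearMap.ker (f N)), inferInstance⟩
  let Z : ℕ → {N : ModuleCat.{0} R // Module.Finite R N} :=
    fun n ↦ n.rec ⟨M, inferInstance⟩ fun _ ↦ s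
  let F : ℕ → ModuleCat.{0} R := fun n ↦ ModuleCat.of R (Fin (r (Z n)) → R)
  let p (n : ℕ) : F n ⟶ (Z n).1 := ModuleCat.ofHom (f (Z n))
  let i (n : ℕ) : (Z (n + 1)).1 ⟶ F n := ModuleCat.ofHom (LinearMap.ker (f (Z n))).subtype
  have w (n : ℕ) : i n ≫ p n = 0 := by
    ext x
    exact x.2
  refine ⟨ChainComplex.of F (fun n ↦ p (n + 1) ≫ i n) fun n ↦ ?_, fun n ↦ (Z n).1, p, i, w, rfl,
    fun n ↦ (Z n).2, fun n ↦ ?_, fun n ↦ ?_, fun n ↦ ?_, fun n ↦ ?_⟩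
  · rw [Category.assoc, ← Category.assoc (i (n + 1)), w (n + 1), Limits.zero_comp, Limits.comp_zero]
  · exact inferInstanceAs (Module.Finite R (Fin (r (Z n)) → R))
  · exact inferInstanceAs (Module.Free R (Fin (r (Z n)) → R))
  · exact ChainComplex.of_d F (fun n ↦ p (n + 1) ≫ i n) n
  · exact
    { exact := (ShortComplex.ShortExact.moduleCat_exact_iff_function_exact _).mpr
        (LinearMap.exact_subtype_ker_map (f (Z n)))
      mono_f := (ModuleCat.mono_iff_injective _).mpr (Submodule.subtype_injective _)
      epi_g := (ModuleCat.epi_iff_surjective _).mpr (hf (Z n)) }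

/-- If the `n`-th syzygy is projective, the resolved module has projective dimension at most `n`. -/
theorem pd_of_syzygy {R : Type} [CommRing R] {K : ChainComplex (ModuleCat.{0} R) ℕ}
    {Z : ℕ → ModuleCat.{0} R} {p : ∀ n, K.X n ⟶ Z n} {i : ∀ n, Z (n + 1) ⟶ K.X n}
    {w : ∀ n, i n ≫ p n = 0} (hS : ∀ n, (ShortComplex.mk _ _ (w n)).ShortExact)
    (hK : ∀ n, Projective (K.X n)) (n : ℕ) (h : HasProjectiveDimensionLT (Z n) 1) :
    HasProjectiveDimensionLT (Z 0) (n + 1) := by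
  suffices ∀ m j, m + j = n → HasProjectiveDimensionLT (Z m) (j + 1) from
    this 0 n (by omega)
  intro m j
  induction j generalizing m with
  | zero => rintro rfl; exact h
  | succ j ih =>
    intro hm
    exact ((hS m).hasProjectiveDimensionLT_X₃_iff j (hK m)).mpr (ih (m + 1) (by omega))

/-- Exactness of `k ⊗ Kₙ₊₂ → k ⊗ Kₙ₊₁ → k ⊗ Kₙ` forces `Zₙ` to be free: since the image of
`Kₙ₊₂` dies in `Zₙ₊₁`, the map `k ⊗ Zₙ₊₁ → k ⊗ Kₙ` is injective, and the local criterion applies to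
`Zₙ₊₁ → Kₙ → Zₙ → 0`. -/
theorem free_syzygy {R : Type} [CommRing R] [IsLocalRing R]
    {K : ChainComplex (ModuleCat.{0} R) ℕ}
    {Z : ℕ → ModuleCat.{0} R} {p : ∀ n, K.X n ⟶ Z n} {i : ∀ n, Z (n + 1) ⟶ K.X n}
    {w : ∀ n, i n ≫ p n = 0} (hS : ∀ n, (ShortComplex.mk _ _ (w n)).ShortExact)
    (hd : ∀ n, K.d (n + 1) n = p (n + 1) ≫ i n) (n : ℕ)
    [Module.Finite R (Z (n + 1))] [Module.Finite R (K.X n)] [Module.Free R (K.X n)]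
    (hex : Function.Exact ((K.d (n + 2) (n + 1)).hom.lTensor (ResidueField R))
      ((K.d (n + 1) n).hom.lTensor (ResidueField R))) : Module.Free R (Z n) := by
  have hp (n : ℕ) : Function.Surjective (p n).hom := (hS n).moduleCat_surjective_g
  refine Module.free_of_lTensor_residueField_injective (i n).hom (p n).hom (hp n)
    ((ShortComplex.ShortExact.moduleCat_exact_iff_function_exact _).mp (hS n).exact) ?_
  rw [hd, hd, ModuleCat.hom_comp, ModuleCat.hom_comp, LinearMap.lTensor_comp,
    LinearMap.lTensor_comp] at hex
  rw [injective_iff_map_eq_zero]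
  intro a ha
  obtain ⟨b, rfl⟩ := LinearMap.lTensor_surjective (ResidueField R) (hp (n + 1)) a
  obtain ⟨c, rfl⟩ := (hex b).mp ha
  have hz : (p (n + 1)).hom ∘ₗ (i (n + 1)).hom = 0 := by
    rw [← ModuleCat.hom_comp, w]; rfl
  rw [LinearMap.comp_apply, ← LinearMap.comp_apply, ← LinearMap.lTensor_comp, hz,
    LinearMap.lTensor_zero, LinearMap.zero_apply]

open MonoidalCategory in
/-- Tor may be computed from any projective resolution of the second argument. -/
theorem exact_lTensor_of_isZero_tor {R : Type} [CommRing R] {M N : ModuleCat.{0} R}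
    (P : ProjectiveResolution N) (n : ℕ)
    (h : Limits.IsZero (((Tor (ModuleCat R) (n + 1)).obj M).obj N)) :
    Function.Exact ((P.complex.d (n + 2) (n + 1)).hom.lTensor M)
      ((P.complex.d (n + 1) n).hom.lTensor M) := by
  have h1 := h.of_iso (P.isoLeftDerivedObj ((tensoringLeft (ModuleCat.{0} R)).obj M) (n + 1)).symm
  have h2 := (HomologicalComplex.exactAt_iff_isZero_homology _ _).mpr h1
  rw [HomologicalComplex.exactAt_iff' _ (n + 1 + 1) (n + 1) n (by simp) (by simp)] at h2
  exact (ShortComplex.ShortExact.moduleCat_exact_iff_function_exact _).mp h2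

/-- A single vanishing `Tor_{n+1}(k, M)` bounds the projective dimension of a finite module `M`
by `n`. -/
theorem hasProjectiveDimensionLT_of_isZero_tor (R : Type) [CommRing R] [IsNoetherianRing R]
    [IsLocalRing R] (M : ModuleCat.{0} R) [Module.Finite R M] (n : ℕ)
    (h : Limits.IsZero
      (((Tor (ModuleCat R) (n + 1)).obj (ModuleCat.of R (ResidueField R))).obj M)) :
    HasProjectiveDimensionLT M (n + 1) := by
  obtain ⟨K, Z, p, i, w, rfl, hZf, hKf, hKfree, hd, hS⟩ := exists_syzygies M
  have hK (n : ℕ) : Projective (K.X n) := ModuleCat.projective_of_categoryTheory_projective _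
  obtain ⟨P, rfl⟩ := exists_resolution K p i w hd hS hK
  have := free_syzygy hS hd n (exact_lTensor_of_isZero_tor P n h)
  exact pd_of_syzygy hS hK n (projective_iff_pd.mpr (Module.Projective.of_free))

end

/-- Auslander–Buchsbaum–Serre (homological direction): if `(R, m, k)` is a Noetherian
local ring with `Tor^R_i(k, k) = 0` for all sufficiently large `i`, then `R` is regular. -/
theorem stmt7 (R : Type) [CommRing R] [IsNoetherianRing R] [IsLocalRing R]
    (h : ∃ N : ℕ, ∀ i ≥ N,
      Limits.IsZero (((Tor (ModuleCat R) i).obj (ModuleCat.of R (ResidueField R))).obj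
        (ModuleCat.of R (ResidueField R)))) :
    IsRegularLocal R := by
  obtain ⟨N, hN⟩ := h
  have : Module.Finite R (ModuleCat.of R (ResidueField R)) :=
    inferInstanceAs (Module.Finite R (ResidueField R))
  -- Degree `N + 1` is used because the vanishing criterion needs a positive degree.
  exact isRegularLocal_of_hasProjectiveDimensionLT R (N + 1)
    (hasProjectiveDimensionLT_of_isZero_tor R _ N (hN (N + 1) (by omega)))
end

section
/- Let (R, m, k) be a regular local ring of prime characteristic p whose Frobenius endomorphism F : R → R, r ↦ r^p, is module-finite. Then F is flat, i.e., R viewed as an R-module via F is flat. -/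
open RingTheory.Sequence IsLocalRing in
/-- Freeness criterion: a finite module over a Noetherian local ring is free if the maximal ideal
is generated by a sequence that is weakly regular on the module. -/
theorem free_of_isWeaklyRegular {R M : Type*} [CommRing R] [IsLocalRing R] [IsNoetherianRing R]
    [AddCommGroup M] [Module R M] [Module.Finite R M] (rs : List R)
    (hspan : Ideal.ofList rs = maximalIdeal R) (hreg : IsWeaklyRegular M rs) :
    Module.Free R M := by
  induction hn : rs.length generalizing R M rs with
  | zero =>
    obtain rfl := List.length_eq_zero_iff.mp hn
    have hF : IsField R := isField_iff_maximalIdeal_eq.mpr (by rw [← hspan]; simp)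
    let := hF.toField
    exact Module.Free.of_divisionRing R M
  | succ n ih =>
    obtain ⟨x, xs, rfl⟩ := List.exists_cons_of_length_eq_add_one hn
    have hx : x ∈ maximalIdeal R := by
      rw [← hspan]; exact Ideal.subset_span (by simp)
    rw [isWeaklyRegular_cons_iff'] at hreg
    have hnt : Nontrivial (R ⧸ Ideal.span {x}) := Ideal.Quotient.nontrivial_iff.mpr fun h =>
      (Ideal.IsPrime.ne_top' : maximalIdeal R ≠ ⊤)
        (top_le_iff.mp (h ▸ (Ideal.span_singleton_le_iff_mem _).mpr hx))
    have hloc : IsLocalRing (R ⧸ Ideal.span {x}) :=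
      IsLocalRing.of_surjective' _ Ideal.Quotient.mk_surjective
    have hfin : Module.Finite (R ⧸ Ideal.span {x}) (QuotSMulTop x M) :=
      Module.Finite.of_restrictScalars_finite R _ _
    have hspan' : Ideal.ofList (xs.map (Ideal.Quotient.mk (Ideal.span {x}))) =
        maximalIdeal (R ⧸ Ideal.span {x}) := by
      rw [← map_maximalIdeal_of_surjective _ Ideal.Quotient.mk_surjective, ← hspan,
        Ideal.ofList_cons, Ideal.map_sup, Ideal.map_quotient_self, bot_sup_eq, Ideal.map_ofList]
    have hfree := ih (xs.map (Ideal.Quotient.mk (Ideal.span {x}))) hspan' hreg.2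
      (by simpa using hn)
    have hfp : Module.FinitePresentation R M := Module.finitePresentation_of_finite R M
    exact (Module.free_quotSMulTop_iff_free R M
      (by rwa [jacobson_eq_maximalIdeal ⊥ bot_ne_top]) hreg.1).mp hfree

open RingTheory.Sequence IsLocalRing in
/-- The elements of a weakly regular sequence in the maximal ideal may be replaced one at a time by
their `k`-th powers: the element to be replaced is moved to the end, where the claim is that a
power of a regular element is regular. The list `b` holds the elements that are kept. -/
theorem isWeaklyRegular_map_pow_append {R : Type*} [CommRing R] [IsLocalRing R]
    [IsNoetherianRing R] {k : ℕ} (hk : k ≠ 0) (a b : List R)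
    (hmem : ∀ r ∈ a ++ b, r ∈ maximalIdeal R) (hreg : IsWeaklyRegular R (a ++ b)) :
    IsWeaklyRegular R (a.map (· ^ k) ++ b) := by
  induction a generalizing b with
  | nil => simpa using hreg
  | cons x a ih =>
    have h1 : IsWeaklyRegular R ((a ++ b) ++ [x]) :=
      isWeaklyRegular_of_perm_of_subset_maximalIdeal hreg
        (List.perm_append_singleton x (a ++ b)).symm hmem
    have hmem' : ∀ r ∈ (a ++ b) ++ [x ^ k], r ∈ maximalIdeal R := by
      intro r hr
      rcases List.mem_append.mp hr with hr | hr
      · exact hmem r (List.mem_cons_of_mem _ hr)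
      · rw [List.mem_singleton.mp hr]
        exact Ideal.pow_mem_of_mem _ (hmem x (by simp)) k (Nat.pos_of_ne_zero hk)
    have h2 : IsWeaklyRegular R ((a ++ b) ++ [x ^ k]) := by
      rw [isWeaklyRegular_append_iff, isWeaklyRegular_singleton_iff] at h1 ⊢
      exact ⟨h1.1, h1.2.pow k⟩
    have hperm : List.Perm ((a ++ b) ++ [x ^ k]) (a ++ (x ^ k :: b)) :=
      (List.perm_append_singleton _ _).trans List.perm_middle.symm
    have h3 := ih (x ^ k :: b) (fun r hr => hmem' r (hperm.mem_iff.mpr hr))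
      (isWeaklyRegular_of_perm_of_subset_maximalIdeal h2 hperm hmem')
    have hperm' : List.Perm (a.map (· ^ k) ++ (x ^ k :: b)) ((x :: a).map (· ^ k) ++ b) :=
      List.perm_middle
    refine isWeaklyRegular_of_perm_of_subset_maximalIdeal h3 hperm' fun r hr => ?_
    rcases List.mem_append.mp hr with hr | hr
    · obtain ⟨y, hy, rfl⟩ := List.mem_map.mp hr
      exact Ideal.pow_mem_of_mem _ (hmem y (by simp [hy])) k (Nat.pos_of_ne_zero hk)
    · rcases List.mem_cons.mp hr with rfl | hr
      · exact Ideal.pow_mem_of_mem _ (hmem x (by simp)) k (Nat.pos_of_ne_zero hk)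
      · exact hmem r (by simp [hr])

open RingTheory.Sequence IsLocalRing in
theorem isWeaklyRegular_map_pow {R : Type*} [CommRing R] [IsLocalRing R]
    [IsNoetherianRing R] {k : ℕ} (hk : k ≠ 0) (a : List R)
    (hmem : ∀ r ∈ a, r ∈ maximalIdeal R) (hreg : IsWeaklyRegular R a) :
    IsWeaklyRegular R (a.map (· ^ k)) := by
  simpa using isWeaklyRegular_map_pow_append hk a [] (by simpa using hmem) (by simpa using hreg)

open IsLocalRing in
/-- Prime avoidance: in positive dimension there is an element of the maximal ideal outside its
square and outside all minimal primes. -/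
theorem exists_mem_maximalIdeal_notMem {R : Type*} [CommRing R] [IsLocalRing R]
    [IsNoetherianRing R] (hdim : ringKrullDim R ≠ 0) :
    ∃ x ∈ maximalIdeal R, x ∉ maximalIdeal R ^ 2 ∧ ∀ P ∈ minimalPrimes R, x ∉ P := by
  by_contra! hcon
  have hfin : (insert (maximalIdeal R ^ 2) (minimalPrimes R)).Finite :=
    (minimalPrimes.finite_of_isNoetherianRing R).insert _
  have hsub : (maximalIdeal R : Set R) ⊆
      ⋃ I ∈ insert (maximalIdeal R ^ 2) (minimalPrimes R), ((id I : Ideal R) : Set R) := by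
    intro x hx
    by_cases h2 : x ∈ maximalIdeal R ^ 2
    · exact Set.mem_biUnion (Set.mem_insert _ _) h2
    · obtain ⟨P, hP, hxP⟩ := hcon x hx h2
      exact Set.mem_biUnion (Set.mem_insert_of_mem _ hP) hxP
  obtain ⟨I, rfl | hI, hle⟩ := (Ideal.subset_union_prime_finite hfin
    (maximalIdeal R ^ 2) (maximalIdeal R ^ 2) (fun I hI h _ => (hI.resolve_left h).1.1)).mp hsub
  · exact (maximalIdeal_sq_lt_of_ringKrullDim_ne_zero hdim).not_ge hle
  · -- a maximal ideal that is also a minimal prime has height zero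
    have : I = maximalIdeal R := le_antisymm (le_maximalIdeal hI.1.1.ne_top) hle
    subst this
    apply hdim
    rw [← maximalIdeal_height_eq_ringKrullDim, Ideal.height_eq_zero_iff.mpr hI]
    rfl

open IsLocalRing in
/-- If `n + 1` elements generate the maximal ideal and `x` lies in it but not in its square, then
`n` elements generate its image modulo `x`: writing `x` in the generators, some coefficient is
a unit, and the corresponding generator is redundant modulo `x`. -/
theorem exists_span_quotient {R : Type*} [CommRing R] [IsLocalRing R] {n : ℕ} (f : Fin (n + 1) → R)
    (hf : Ideal.span (Set.range f) = maximalIdeal R) {x : R} (hx : x ∈ maximalIdeal R)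
    (hx2 : x ∉ maximalIdeal R ^ 2) :
    ∃ g : Fin n → R ⧸ Ideal.span {x}, Ideal.span (Set.range g) =
      (maximalIdeal R).map (Ideal.Quotient.mk (Ideal.span {x})) := by
  have hfm : ∀ i, f i ∈ maximalIdeal R := fun i => hf ▸ Ideal.subset_span ⟨i, rfl⟩
  obtain ⟨c, hc⟩ := (Ideal.mem_span_range_iff_exists_fun).mp (hf.symm ▸ hx)
  obtain ⟨j, hj⟩ : ∃ j, IsUnit (c j) := by
    by_contra! h
    refine hx2 (hc ▸ Ideal.sum_mem _ fun i _ => ?_)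
    rw [pow_two]
    exact Ideal.mul_mem_mul ((mem_maximalIdeal _).mpr (h i)) (hfm i)
  refine ⟨fun i => Ideal.Quotient.mk _ (f (j.succAbove i)), ?_⟩
  rw [← hf, Ideal.map_span]
  apply le_antisymm
  · refine Ideal.span_mono ?_
    rintro _ ⟨i, rfl⟩
    exact ⟨_, ⟨_, rfl⟩, rfl⟩
  · rw [Ideal.span_le]
    rintro _ ⟨_, ⟨i, rfl⟩, rfl⟩
    rcases Fin.eq_self_or_eq_succAbove j i with rfl | ⟨i, rfl⟩
    · have h0 : Ideal.Quotient.mk (Ideal.span {x}) x = 0 :=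
        Ideal.Quotient.eq_zero_iff_mem.mpr (Ideal.mem_span_singleton_self x)
      rw [← congrArg (Ideal.Quotient.mk (Ideal.span {x})) hc,
        Fin.sum_univ_succAbove _ i, map_add, map_mul, map_sum] at h0
      have hu := hj.map (Ideal.Quotient.mk (Ideal.span {x}))
      rw [SetLike.mem_coe, ← Ideal.unit_mul_mem_iff_mem _ hu, eq_neg_of_add_eq_zero_left h0]
      refine neg_mem (Ideal.sum_mem _ fun k _ => ?_)
      rw [map_mul]
      exact Ideal.mul_mem_left _ _ (Ideal.subset_span ⟨k, rfl⟩)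
    · exact Ideal.subset_span ⟨i, rfl⟩

open IsLocalRing in
/-- If a principal prime ideal `(x)` in a Noetherian local ring is such that `x` lies in no minimal
prime, the ring is a domain: a minimal prime `P ⊆ (x)` satisfies `P = xP`, so `P = 0`. -/
theorem isDomain_of_isPrime_span_singleton {R : Type*} [CommRing R] [IsLocalRing R]
    [IsNoetherianRing R] {x : R} (hx : x ∈ maximalIdeal R) (hprime : (Ideal.span {x}).IsPrime)
    (hmin : ∀ P ∈ minimalPrimes R, x ∉ P) : IsDomain R := by
  obtain ⟨P, hP, hPx⟩ := Ideal.exists_minimalPrimes_le (bot_le : ⊥ ≤ Ideal.span {x})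
  have hPp : P.IsPrime := hP.1.1
  have hbot : P = ⊥ := by
    refine Submodule.eq_bot_of_le_smul_of_le_jacobson_bot (Ideal.span {x}) P
      (IsNoetherian.noetherian P) ?_ ?_
    · intro y hy
      obtain ⟨a, rfl⟩ := Ideal.mem_span_singleton.mp (hPx hy)
      have ha : a ∈ P := (hPp.mem_or_mem hy).resolve_left (hmin P hP)
      exact Submodule.smul_mem_smul (Ideal.mem_span_singleton_self x) ha
    · rw [jacobson_eq_maximalIdeal ⊥ bot_ne_top]
      exact (Ideal.span_singleton_le_iff_mem _).mpr hx
  subst hbot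
  exact IsDomain.of_bot_isPrime R

open RingTheory.Sequence IsLocalRing in
/-- A regular local ring is a domain, and its maximal ideal is generated by a weakly regular
sequence. The induction on the number of generators needs only the lower bound on the dimension;
the opposite one is Krull's height theorem. -/
theorem regular_aux (n : ℕ) : ∀ (R : Type) [CommRing R] [IsLocalRing R] [IsNoetherianRing R]
    (f : Fin n → R), Ideal.span (Set.range f) = maximalIdeal R → n ≤ ringKrullDim R →
    IsDomain R ∧ ∃ rs : List R, Ideal.ofList rs = maximalIdeal R ∧ IsWeaklyRegular R rs := by
  induction n with
  | zero =>
    intro R _ _ _ f hf _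
    have hbot : maximalIdeal R = ⊥ := by rw [← hf]; simp
    exact ⟨(isField_iff_maximalIdeal_eq.mpr hbot).isDomain, [], by simp [hbot], .nil R R⟩
  | succ n ih =>
    intro R _ _ _ f hf hdim
    have hdim0 : ringKrullDim R ≠ 0 := by
      intro h
      rw [h] at hdim
      exact absurd hdim (by norm_cast)
    obtain ⟨x, hx, hx2, hmin⟩ := exists_mem_maximalIdeal_notMem hdim0
    have hnt : Nontrivial (R ⧸ Ideal.span {x}) := Ideal.Quotient.nontrivial_iff.mpr fun h =>
      (Ideal.IsPrime.ne_top' : maximalIdeal R ≠ ⊤)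
        (top_le_iff.mp (h ▸ (Ideal.span_singleton_le_iff_mem _).mpr hx))
    have hloc : IsLocalRing (R ⧸ Ideal.span {x}) :=
      IsLocalRing.of_surjective' _ Ideal.Quotient.mk_surjective
    have hmap : (maximalIdeal R).map (Ideal.Quotient.mk (Ideal.span {x})) =
        maximalIdeal (R ⧸ Ideal.span {x}) :=
      map_maximalIdeal_of_surjective _ Ideal.Quotient.mk_surjective
    obtain ⟨g, hg⟩ := exists_span_quotient f hf hx hx2
    have hdim' : (n : WithBot ℕ∞) ≤ ringKrullDim (R ⧸ Ideal.span {x}) := by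
      have h := ringKrullDim_le_ringKrullDim_quotSMulTop_succ hx
      rw [← Submodule.ideal_span_singleton_smul, smul_eq_mul, Ideal.mul_top] at h
      have h' := hdim.trans h
      push_cast at h'
      exact ENat.WithBot.add_le_add_one_right_iff.mp h'
    obtain ⟨hdom, rs, hrs, hreg⟩ := ih (R ⧸ Ideal.span {x}) g (hg.trans hmap) hdim'
    have hdomR : IsDomain R := isDomain_of_isPrime_span_singleton hx
      ((Ideal.Quotient.isDomain_iff_prime _).mp hdom) hmin
    have hx0 : x ≠ 0 := fun h => hx2 (h ▸ zero_mem _)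
    obtain ⟨ts, rfl⟩ := List.map_surjective_iff.mpr
      (Ideal.Quotient.mk_surjective (I := Ideal.span {x})) rs
    refine ⟨hdomR, x :: ts, ?_, ?_⟩
    · rw [← Ideal.map_ofList, ← hmap] at hrs
      have h := congrArg (Ideal.comap (Ideal.Quotient.mk (Ideal.span {x}))) hrs
      rw [Ideal.comap_map_of_surjective' _ Ideal.Quotient.mk_surjective,
        Ideal.comap_map_of_surjective' _ Ideal.Quotient.mk_surjective, Ideal.mk_ker,
        sup_eq_left.mpr ((Ideal.span_singleton_le_iff_mem _).mpr hx)] at h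
      rw [Ideal.ofList_cons, sup_comm, h]
    · rw [isWeaklyRegular_cons_iff]
      refine ⟨(IsRegular.of_ne_zero hx0).left.isSMulRegular, ?_⟩
      have hreg' : IsWeaklyRegular (R ⧸ Ideal.span {x}) ts :=
        (isWeaklyRegular_map_algebraMap_iff (R ⧸ Ideal.span {x}) _ ts).mp hreg
      refine (LinearEquiv.isWeaklyRegular_congr (Submodule.quotEquivOfEq _ _ ?_) ts).mp hreg'
      rw [← Submodule.ideal_span_singleton_smul, smul_eq_mul, Ideal.mul_top]

open RingTheory.Sequence IsLocalRing in
/-- The freeness criterion for a ring `S` viewed as a module through `φ : R →+* S`. Source and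
target are distinct variables so that, when `φ` is the Frobenius endomorphism, the module structure
through `φ` is not confused with the multiplication of `R`. -/
theorem flat_compHom_of_isWeaklyRegular {R S : Type*} [CommRing R] [IsLocalRing R]
    [IsNoetherianRing R] [CommRing S] (φ : R →+* S)
    (hfin : @Module.Finite R S _ _ (Module.compHom S φ)) (rs : List R)
    (hspan : Ideal.ofList rs = maximalIdeal R) (hreg : IsWeaklyRegular S (rs.map φ)) :
    @Module.Flat R S _ _ (Module.compHom S φ) := by
  let : Module R S := Module.compHom S φ
  have hreg' : IsWeaklyRegular S rs :=
    ((AddEquiv.refl S).isWeaklyRegular_congr (bs := rs.map φ) (List.forall₂_map_right_iff.mpr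
      (List.forall₂_same.mpr fun _ _ _ => rfl))).mpr hreg
  have := free_of_isWeaklyRegular rs hspan hreg'
  infer_instance

/-- Kunz's theorem (easy direction): if `(R, m, k)` is a regular local ring of prime
characteristic `p` whose Frobenius `F : r ↦ r^p` is module-finite, then `F` is flat,
i.e. `R` viewed as an `R`-module via `F` is flat. -/
theorem stmt8 (R : Type) [CommRing R] [IsLocalRing R] (p : ℕ) [Fact p.Prime] [CharP R p]
    (hreg : IsRegularLocal R)
    (hfin : @Module.Finite R R _ _ (Module.compHom _ (frobenius R p))) :
    @Module.Flat R R _ _ (Module.compHom _ (frobenius R p)) := by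
  obtain ⟨hN, n, f, hf, hdim⟩ := hreg
  obtain ⟨-, rs, hspan, hrs⟩ := regular_aux n R f hf hdim.ge
  exact flat_compHom_of_isWeaklyRegular (frobenius R p) hfin rs hspan
    (isWeaklyRegular_map_pow (Fact.out : p.Prime).ne_zero rs
      (fun r hr => hspan ▸ Ideal.subset_span hr) hrs)
end

section
/- Let (R, m, k) be a Noetherian local ring of prime characteristic p with F-finite Frobenius endomorphism F. If R viewed as an R-module via F has finite flat dimension, then R is regular. -/
/-!
Write `k` for the residue field of the local ring `(R, m)`, and let a finitely generated module
have *finite projective dimension* when `PdLT R M n` holds for some `n`.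

Vanishing of `Tor_i(k, R_F)` for one large `i` already bounds the projective dimension of `R_F`:
tensoring a finite free resolution of `R_F` with `k`, the vanishing makes
`k ⊗ K_{n+1} → k ⊗ P_n` injective for the syzygies `K_j`, which forces `K_n` to be free
(`exists_pdLT_of_tor`). By F-finiteness and change of rings, restriction along `F`, hence along
every power `F^e`, preserves finite projective dimension (`exists_frobenius_power`).

Choose a proper ideal `I` maximal among those for which `R ⧸ I` has finite projective dimension.
An element `x ∈ m` regular on `R ⧸ I` would give the larger ideal `I + (x)`, so `R ⧸ I` contains
some `y ≠ 0` killed by `m` (`exists_quotient_socle`). By Krull's intersection theorem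
`y ∉ m ^ e (R ⧸ I)` for some `e`. Viewed in `R ⧸ I` with scalars restricted along `F^e`, the
element `y` is killed by `m` and lies outside `m` times the module, because `m` acts there
through `p ^ e`-th powers, which lie in `m ^ e`. Such an element spans a direct summand isomorphic
to `k` (`exists_retract_twist`), so `k` has finite projective dimension.

That `R` is then regular is Serre's theorem, proved by induction on the dimension
(`isRegularLocal_of_pdLT`). If `m ≠ 0` then `R` has no nonzero element killed by `m`, since
otherwise every module of finite projective dimension would be free, including `k`. Prime avoidance
provides a regular element `x ∈ m` outside `m ^ 2`; the module `m / x m` has finite projective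
dimension over `R / x` and has `k`, spanned by the class of `x`, as a direct summand. The induction
hypothesis applies to `R / x`.
-/

open CategoryTheory

namespace KR
open IsLocalRing Function TensorProduct
open scoped Pointwise

/-- `M` has projective dimension less than `n` over `R`; the value `n = 0` means `M = 0`. -/
abbrev PdLT (R : Type) [CommRing R] (M : Type) [AddCommGroup M] [Module R M] (n : ℕ) : Prop :=
  HasProjectiveDimensionLT (ModuleCat.of R M) n

/-! ### Projective dimension of modules -/

section basic
variable {R : Type} [CommRing R] {M N P : Type} [AddCommGroup M] [Module R M]
  [AddCommGroup N] [Module R N] [AddCommGroup P] [Module R P]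

lemma pdLT_one_iff : PdLT R M 1 ↔ Module.Projective R M := by
  rw [PdLT, ← projective_iff_hasProjectiveDimensionLT_one, ← IsProjective.iff_projective]

lemma pdLT_zero_iff : PdLT R M 0 ↔ Subsingleton M := by
  rw [PdLT, hasProjectiveDimensionLT_zero_iff_isZero, ModuleCat.isZero_iff_subsingleton]

lemma PdLT.mono {m n : ℕ} (h : PdLT R M m) (hmn : m ≤ n) : PdLT R M n :=
  hasProjectiveDimensionLT_of_ge _ m n hmn

lemma PdLT.of_equiv {n : ℕ} (e : M ≃ₗ[R] N) (h : PdLT R M n) : PdLT R N n :=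
  hasProjectiveDimensionLT_of_iso e.toModuleIso n

lemma PdLT.of_retract {n : ℕ} (i : M →ₗ[R] N) (r : N →ₗ[R] M) (hri : r ∘ₗ i = LinearMap.id)
    (h : PdLT R N n) : PdLT R M n :=
  Retract.hasProjectiveDimensionLT (X := ModuleCat.of R M) (Y := ModuleCat.of R N)
    ⟨ModuleCat.ofHom i, ModuleCat.ofHom r, by rw [← ModuleCat.ofHom_comp, hri]; rfl⟩ n

lemma shortExact_of {f : M →ₗ[R] N} {g : N →ₗ[R] P} (hf : Injective f) (hfg : Exact f g)
    (hg : Surjective g) :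
    (ShortComplex.mk (ModuleCat.ofHom f) (ModuleCat.ofHom g)
      (by ext x; exact hfg.apply_apply_eq_zero x)).ShortExact where
  exact := by
    rw [ShortComplex.ShortExact.moduleCat_exact_iff_function_exact]
    exact hfg
  mono_f := (ModuleCat.mono_iff_injective _).2 hf
  epi_g := (ModuleCat.epi_iff_surjective _).2 hg

lemma PdLT.middle {f : M →ₗ[R] N} {g : N →ₗ[R] P} (hf : Injective f) (hfg : Exact f g)
    (hg : Surjective g) {n : ℕ} (h₁ : PdLT R M n) (h₃ : PdLT R P n) : PdLT R N n :=
  (shortExact_of hf hfg hg).hasProjectiveDimensionLT_X₂ n h₁ h₃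

lemma PdLT.right {f : M →ₗ[R] N} {g : N →ₗ[R] P} (hf : Injective f) (hfg : Exact f g)
    (hg : Surjective g) {n : ℕ} (h₁ : PdLT R M n) (h₂ : PdLT R N (n + 1)) : PdLT R P (n + 1) :=
  (shortExact_of hf hfg hg).hasProjectiveDimensionLT_X₃ n h₁ h₂

lemma PdLT.left {f : M →ₗ[R] N} {g : N →ₗ[R] P} (hf : Injective f) (hfg : Exact f g)
    (hg : Surjective g) {n : ℕ} (h₂ : PdLT R N n) (h₃ : PdLT R P (n + 1)) : PdLT R M n :=
  (shortExact_of hf hfg hg).hasProjectiveDimensionLT_X₁ n h₂ h₃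

lemma PdLT.ker {f : M →ₗ[R] N} (hf : Surjective f) [Module.Projective R M] {n : ℕ}
    (h : PdLT R N (n + 2)) : PdLT R (LinearMap.ker f) (n + 1) :=
  PdLT.left (Submodule.subtype_injective _) f.exact_subtype_ker_map hf
    ((pdLT_one_iff.2 inferInstance).mono (by omega)) h

lemma PdLT.pi {n : ℕ} (h : PdLT R M n) (m : ℕ) : PdLT R (Fin m → M) n := by
  induction m with
  | zero => exact (pdLT_zero_iff.2 inferInstance).mono (Nat.zero_le n)
  | succ m ih =>
    refine PdLT.middle (f := LinearMap.single R (fun _ : Fin (m + 1) ↦ M) 0)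
      (g := LinearMap.funLeft R M Fin.succ) (fun a b hab ↦ by simpa using congrFun hab 0) ?_ ?_ h ih
    · intro v
      constructor
      · intro hv
        refine ⟨v 0, ?_⟩
        ext j
        refine Fin.cases ?_ (fun j ↦ ?_) j
        · simp
        · simpa using (congrFun hv j).symm
      · rintro ⟨a, rfl⟩
        ext j
        simp [LinearMap.funLeft_apply]
    · exact LinearMap.funLeft_surjective_of_injective _ _ _ (Fin.succ_injective _)

end basic

/-! ### Modules over a local ring -/

section localring
variable {R : Type} [CommRing R] [IsLocalRing R]

/-- An element killed by `m` but not in `m N` spans a direct summand of `N` isomorphic to the residue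
field: a linear form on the `k`-vector space `N / m N` taking the value `1` at its class splits the
inclusion. -/
lemma exists_retract {N : Type} [AddCommGroup N] [Module R N] (y : N)
    (hy : ∀ r ∈ maximalIdeal R, r • y = 0)
    (hy' : y ∉ maximalIdeal R • (⊤ : Submodule R N)) :
    ∃ (i : ResidueField R →ₗ[R] N) (r : N →ₗ[R] ResidueField R), r ∘ₗ i = LinearMap.id := by
  let _ : Module (ResidueField R) (N ⧸ maximalIdeal R • (⊤ : Submodule R N)) :=
    inferInstanceAs (Module (R ⧸ maximalIdeal R) _)
  have _ : IsScalarTower R (ResidueField R) (N ⧸ maximalIdeal R • (⊤ : Submodule R N)) :=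
    inferInstanceAs (IsScalarTower R (R ⧸ maximalIdeal R) _)
  obtain ⟨φ, hφ⟩ := Module.Projective.exists_dual_eq_one (ResidueField R)
    (x := (maximalIdeal R • (⊤ : Submodule R N)).mkQ y) (by simpa using hy')
  let i : (R ⧸ maximalIdeal R) →ₗ[R] N :=
    (maximalIdeal R).liftQ (LinearMap.toSpanSingleton R N y) (fun r hr ↦ by simpa using hy r hr)
  refine ⟨i, φ.restrictScalars R ∘ₗ Submodule.mkQ _, ?_⟩
  apply LinearMap.ext
  intro c
  obtain ⟨c, rfl⟩ := Ideal.Quotient.mk_surjective c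
  have hi : i (Ideal.Quotient.mk _ c) = c • y := (maximalIdeal R).liftQ_apply _ c
  have hc : (algebraMap R (ResidueField R) c) • (maximalIdeal R • (⊤ : Submodule R N)).mkQ y =
      (maximalIdeal R • (⊤ : Submodule R N)).mkQ (c • y) := by
    rw [algebraMap_smul, map_smul]
  change φ ((maximalIdeal R • (⊤ : Submodule R N)).mkQ (i (Ideal.Quotient.mk _ c))) =
    algebraMap R (ResidueField R) c
  rw [hi, ← hc, map_smul, hφ, smul_eq_mul, mul_one]

lemma one_tmul_eq_zero_iff {N : Type} [AddCommGroup N] [Module R N] (y : N) :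
    (1 : ResidueField R) ⊗ₜ[R] y = 0 ↔ y ∈ maximalIdeal R • (⊤ : Submodule R N) := by
  have := TensorProduct.quotTensorEquivQuotSMul_mk_tmul (M := N) (maximalIdeal R) 1 y
  rw [one_smul, map_one] at this
  rw [← Submodule.Quotient.mk_eq_zero, ← this]
  exact ((TensorProduct.quotTensorEquivQuotSMul N (maximalIdeal R)).map_eq_zero_iff).symm

/-- The case of the Auslander–Buchsbaum formula where the ring has depth zero, witnessed by the
socle element `s`. For a free kernel `K` of a cover `R^a → M`, an element of `K` lying in `m R^a` is
killed by `s`, so its coordinates in a basis of `K` are in `m`; hence `k ⊗ K → k ⊗ R^a` is injective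
and `M` is free. -/
lemma free_of_socle [IsNoetherianRing R] {s : R} (hs : s ≠ 0)
    (hms : ∀ r ∈ maximalIdeal R, r * s = 0) (n : ℕ)
    (M : Type) [AddCommGroup M] [Module R M] [Module.Finite R M] (h : PdLT R M (n + 1)) :
    Module.Free R M := by
  induction n generalizing M with
  | zero =>
    have := pdLT_one_iff.1 h
    exact Module.free_of_flat_of_isLocalRing
  | succ n ih =>
    obtain ⟨a, f, hf⟩ := Module.Finite.exists_fin' R M
    have hK : Module.Free R (LinearMap.ker f) := ih _ (h.ker hf)
    refine Module.free_of_lTensor_residueField_injective (LinearMap.ker f).subtype f hf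
      f.exact_subtype_ker_map ?_
    rw [injective_iff_map_eq_zero]
    intro t ht
    obtain ⟨v, rfl⟩ := TensorProduct.mk_surjective R (LinearMap.ker f) (ResidueField R)
      Ideal.Quotient.mk_surjective t
    simp only [TensorProduct.mk_apply, LinearMap.lTensor_tmul, Submodule.subtype_apply] at ht ⊢
    rw [one_tmul_eq_zero_iff] at ht ⊢
    have hsv : s • (v : Fin a → R) = 0 := by
      refine Submodule.smul_induction_on ht (fun r hr w _ ↦ ?_) (fun x y hx hy ↦ ?_)
      · rw [smul_smul, mul_comm, hms r hr, zero_smul]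
      · rw [smul_add, hx, hy, add_zero]
    let b := Module.Free.chooseBasis R (LinearMap.ker f)
    rw [← b.sum_repr v]
    refine Submodule.sum_mem _ fun i _ ↦ Submodule.smul_mem_smul ?_ trivial
    rw [mem_maximalIdeal, mem_nonunits_iff]
    intro hu
    have h0 : s • v = 0 := Subtype.ext hsv
    have h1 : s * b.repr v i = 0 := by
      simpa using congrArg (fun w ↦ b.repr w i) h0
    exact hs ((hu.mul_left_eq_zero).1 h1)

/-- If `x` is regular on both `R` and `M`, then `M / x M` has at most the projective dimension over
`R / x` that `M` has over `R`: a presentation `0 → K → R^a → M → 0` stays exact modulo `x`. -/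
lemma PdLT.quotSMulTop [IsNoetherianRing R] {x : R} (hx : IsSMulRegular R x) (n : ℕ)
    (M : Type) [AddCommGroup M] [Module R M] [Module.Finite R M] (hxM : IsSMulRegular M x)
    (h : PdLT R M (n + 1)) : PdLT (R ⧸ Ideal.span {x}) (QuotSMulTop x M) (n + 1) := by
  induction n generalizing M with
  | zero =>
    have := pdLT_one_iff.1 h
    have : Module.Free R M := Module.free_of_flat_of_isLocalRing
    exact pdLT_one_iff.2 inferInstance
  | succ n ih =>
    obtain ⟨a, f, hf⟩ := Module.Finite.exists_fin' R M
    have hker := ih (LinearMap.ker f)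
      ((IsSMulRegular.pi fun _ ↦ hx : IsSMulRegular (Fin a → R) x).submodule _ _)
      (h.ker hf)
    have hex₁ : Exact (0 : PUnit.{1} →ₗ[R] LinearMap.ker f) (LinearMap.ker f).subtype :=
      (LinearMap.exact_zero_iff_injective _ _).2 (Submodule.subtype_injective _)
    have hinj : Injective (QuotSMulTop.map x (LinearMap.ker f).subtype) := by
      have := QuotSMulTop.map_first_exact_on_four_term_exact_of_isSMulRegular_last hex₁
        f.exact_subtype_ker_map hxM
      rw [map_zero] at this
      exact (LinearMap.exact_zero_iff_injective _ _).1 this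
    have hF : PdLT (R ⧸ Ideal.span {x}) (QuotSMulTop x (Fin a → R)) 1 :=
      pdLT_one_iff.2 inferInstance
    exact PdLT.right
      (f := (QuotSMulTop.map x (LinearMap.ker f).subtype).extendScalarsOfSurjective
        (Ideal.Quotient.mk_surjective (I := Ideal.span {x})))
      (g := (QuotSMulTop.map x f).extendScalarsOfSurjective
        (Ideal.Quotient.mk_surjective (I := Ideal.span {x})))
      hinj (QuotSMulTop.map_exact x f.exact_subtype_ker_map hf)
      (QuotSMulTop.map_surjective x hf) hker (hF.mono (by omega))

end localring

/-! ### Regular elements and prime avoidance -/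

lemma exists_socle {R : Type} [CommRing R] [IsLocalRing R] [IsNoetherianRing R]
    {M : Type} [AddCommGroup M] [Module R M] {P : Ideal R} (hP : P ∈ associatedPrimes R M)
    (hmP : maximalIdeal R ≤ P) : ∃ s : M, s ≠ 0 ∧ ∀ r ∈ maximalIdeal R, r • s = 0 := by
  obtain ⟨hp, s, hs⟩ := isAssociatedPrime_iff.1 hP
  have hmem : ∀ r, r ∈ P ↔ r • s = 0 := fun r ↦ by
    rw [hs, Submodule.mem_colon_singleton, Submodule.mem_bot]
  refine ⟨s, ?_, fun r hr ↦ (hmem r).1 (hmP hr)⟩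
  rintro rfl
  exact hp.one_notMem ((hmem 1).2 (smul_zero _))

lemma mem_biUnion_associatedPrimes {R : Type} [CommRing R] [IsNoetherianRing R]
    {M : Type} [AddCommGroup M] [Module R M] {x : R} (hx : ¬ IsSMulRegular M x) :
    x ∈ ⋃ p ∈ associatedPrimes R M, (p : Set R) := by
  rw [biUnion_associatedPrimes_eq_zero_divisors]
  rw [isSMulRegular_iff_right_eq_zero_of_smul] at hx
  push Not at hx
  obtain ⟨m, hm, hm0⟩ := hx
  exact ⟨m, hm0, hm⟩

/-- If no nonzero element of `M` is killed by `m`, then no associated prime of `M` contains `m`, and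
prime avoidance gives an `M`-regular element of `m` outside any ideal `J` not containing `m`. -/
lemma exists_regular {R : Type} [CommRing R] [IsLocalRing R] [IsNoetherianRing R]
    (J : Ideal R) (hJ : ¬ maximalIdeal R ≤ J)
    {M : Type} [AddCommGroup M] [Module R M] [Module.Finite R M]
    (h : ∀ s : M, (∀ r ∈ maximalIdeal R, r • s = 0) → s = 0) :
    ∃ x ∈ maximalIdeal R, x ∉ J ∧ IsSMulRegular M x := by
  by_contra! H
  have hfin := associatedPrimes.finite R M
  have hsub : (maximalIdeal R : Set R) ⊆ (J : Set R) ∪ (J : Set R) ∪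
      ⋃ i ∈ (hfin.toFinset : Set (Ideal R)), (i : Set R) := by
    intro x hx
    by_cases hx2 : x ∈ J
    · exact Or.inl (Or.inl hx2)
    · right
      simpa using mem_biUnion_associatedPrimes (H x hx hx2)
  -- prime avoidance tolerates two ideals that need not be prime; `J` takes both places
  rcases (Ideal.subset_union_prime' (f := fun i : Ideal R ↦ i) (a := J) (b := J)
    (fun i hi ↦ (by simpa using hi : i ∈ associatedPrimes R M).1)).1 hsub with h1 | h1 | ⟨P, hP, h1⟩
  · exact hJ h1
  · exact hJ h1
  · obtain ⟨s, hs, hs'⟩ := exists_socle (by simpa using hP) h1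
    exact hs (h s hs')

lemma exists_regular' {R : Type} [CommRing R] [IsLocalRing R] [IsNoetherianRing R]
    (hm : maximalIdeal R ≠ ⊥) (h : ∀ s : R, (∀ r ∈ maximalIdeal R, r * s = 0) → s = 0) :
    ∃ x ∈ maximalIdeal R, x ∉ maximalIdeal R ^ 2 ∧ IsSMulRegular R x := by
  refine exists_regular _ (fun hle ↦ hm ?_) h
  refine Submodule.eq_bot_of_le_smul_of_le_jacobson_bot (maximalIdeal R) _
    (IsNoetherian.noetherian _) ?_ (maximalIdeal_le_jacobson _)
  rwa [smul_eq_mul, ← pow_two]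

/-! ### Finite projective dimension of the residue field implies regularity -/

lemma maximalIdeal_eq_bot_of_socle {R : Type} [CommRing R] [IsLocalRing R] [IsNoetherianRing R]
    {s : R} (hs : s ≠ 0) (hms : ∀ r ∈ maximalIdeal R, r * s = 0) {n : ℕ}
    (h : PdLT R (ResidueField R) (n + 1)) : maximalIdeal R = ⊥ := by
  have : Module.Finite R (ResidueField R) := inferInstanceAs (Module.Finite R (R ⧸ maximalIdeal R))
  have := free_of_socle hs hms n _ h
  have h1 : Module.annihilator R (ResidueField R) = ⊥ := Module.annihilator_eq_bot.2 inferInstance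
  rw [← h1]
  exact (Ideal.annihilator_quotient (I := maximalIdeal R)).symm

/-- The residue field of `R / x` is a direct summand of `m / x m`, spanned by the class of
`x ∉ m ^ 2`, so it inherits finite projective dimension from that module. -/
lemma PdLT.residueField_quotient {R : Type} [CommRing R] [IsLocalRing R] [IsNoetherianRing R]
    {x : R} (hx : x ∈ maximalIdeal R) (hx2 : x ∉ maximalIdeal R ^ 2) (hreg : IsSMulRegular R x)
    [IsLocalRing (R ⧸ Ideal.span {x})]
    {n : ℕ} (h : PdLT R (ResidueField R) (n + 2)) :
    PdLT (R ⧸ Ideal.span {x}) (ResidueField (R ⧸ Ideal.span {x})) (n + 1) := by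
  have h1 : PdLT R (maximalIdeal R) (n + 1) :=
    PdLT.left (Submodule.subtype_injective _) (LinearMap.exact_subtype_mkQ (maximalIdeal R))
      (Submodule.mkQ_surjective _) ((pdLT_one_iff.2 inferInstance).mono (by omega)) h
  have h2 := PdLT.quotSMulTop hreg n (maximalIdeal R) (hreg.submodule _ _) h1
  have hmax : ∀ r ∈ maximalIdeal (R ⧸ Ideal.span {x}), ∃ r' ∈ maximalIdeal R,
      Ideal.Quotient.mk _ r' = r := by
    intro r hr
    obtain ⟨r', rfl⟩ := Ideal.Quotient.mk_surjective r
    refine ⟨r', ?_, rfl⟩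
    rw [mem_maximalIdeal, mem_nonunits_iff] at hr ⊢
    exact fun hu ↦ hr (hu.map _)
  obtain ⟨i, r, hir⟩ := exists_retract (R := R ⧸ Ideal.span {x})
    (N := QuotSMulTop x (maximalIdeal R)) (Submodule.Quotient.mk ⟨x, hx⟩) (by
      intro r hr
      obtain ⟨r, hr', rfl⟩ := hmax r hr
      change Submodule.Quotient.mk (r • (⟨x, hx⟩ : maximalIdeal R)) = _
      rw [Submodule.Quotient.mk_eq_zero]
      have : r • (⟨x, hx⟩ : maximalIdeal R) = x • (⟨r, hr'⟩ : maximalIdeal R) :=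
        Subtype.ext (mul_comm _ _)
      rw [this]
      exact Submodule.smul_mem_pointwise_smul _ _ _ trivial) (by
      intro hmem
      apply hx2
      -- the map `m / x m → R / m ^ 2` kills `m (m / x m)` but not the class of `x`
      let π : maximalIdeal R →ₗ[R] R ⧸ maximalIdeal R ^ 2 :=
        (maximalIdeal R ^ 2).mkQ ∘ₗ (maximalIdeal R).subtype
      have hπ : x • (⊤ : Submodule R (maximalIdeal R)) ≤ LinearMap.ker π := by
        rw [← Submodule.ideal_span_singleton_smul, Submodule.smul_le]
        intro r hr m _
        rw [LinearMap.mem_ker]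
        refine (Submodule.Quotient.mk_eq_zero _).2 ?_
        rw [pow_two]
        exact Ideal.mul_mem_mul ((Ideal.span_singleton_le_iff_mem _).2 hx hr) m.2
      let π' : QuotSMulTop x (maximalIdeal R) →ₗ[R] R ⧸ maximalIdeal R ^ 2 :=
        Submodule.liftQ _ π hπ
      have key : ∀ z ∈ maximalIdeal (R ⧸ Ideal.span {x}) •
          (⊤ : Submodule (R ⧸ Ideal.span {x}) (QuotSMulTop x (maximalIdeal R))), π' z = 0 := by
        intro z hz
        refine Submodule.smul_induction_on hz (fun r hr w _ ↦ ?_) (fun a b ha hb ↦ ?_)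
        · obtain ⟨r, hr', rfl⟩ := hmax r hr
          obtain ⟨w, rfl⟩ := Submodule.Quotient.mk_surjective _ w
          change π (r • w) = 0
          refine (Submodule.Quotient.mk_eq_zero _).2 ?_
          rw [pow_two]
          exact Ideal.mul_mem_mul hr' w.2
        · rw [map_add, ha, hb, add_zero]
      exact (Submodule.Quotient.mk_eq_zero _).1 (key _ hmem))
  exact PdLT.of_retract i r hir h2

/-- Serre's theorem. The strict bound `d` on the Krull dimension is the induction parameter. -/
theorem isRegularLocal_of_pdLT (d : ℕ) : ∀ (R : Type) [CommRing R] [IsLocalRing R]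
    [IsNoetherianRing R] (n : ℕ), ringKrullDim R + 1 ≤ d → PdLT R (ResidueField R) n →
    IsRegularLocal R := by
  induction d with
  | zero =>
    intro R _ _ _ n hd h
    have h0 : (0 : WithBot ℕ∞) ≤ ringKrullDim R := ringKrullDim_nonneg_of_nontrivial
    have h1 := (add_le_add_left h0 1).trans hd
    norm_num at h1
  | succ d ih =>
    intro R _ _ _ n hd h
    have hn := h.mono (show n ≤ n + 2 by omega)
    by_cases hm : maximalIdeal R = ⊥
    · exact ⟨inferInstance, 0, Fin.elim0, by simp [hm],
        ringKrullDim_eq_zero_of_isField (isField_iff_maximalIdeal_eq.2 hm)⟩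
    have hs : ∀ s : R, (∀ r ∈ maximalIdeal R, r * s = 0) → s = 0 := fun s hs ↦
      by_contra fun h0 ↦ hm (maximalIdeal_eq_bot_of_socle h0 hs hn)
    obtain ⟨x, hx, hx2, hreg⟩ := exists_regular' hm hs
    have : Nontrivial (R ⧸ Ideal.span {x}) := Ideal.Quotient.nontrivial_iff.2
      (fun h1 ↦ hx (Ideal.span_singleton_eq_top.1 h1))
    have : IsLocalRing (R ⧸ Ideal.span {x}) :=
      IsLocalRing.of_surjective' (Ideal.Quotient.mk (Ideal.span {x})) Ideal.Quotient.mk_surjective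
    have hdim := ringKrullDim_quotient_span_singleton_succ_eq_ringKrullDim hreg hx
    obtain ⟨-, m, f, hf, hfd⟩ := ih (R ⧸ Ideal.span {x}) (n + 1) (by
      rw [← hdim] at hd
      push_cast at hd
      exact (ENat.WithBot.add_le_add_one_right_iff).1 hd) (hn.residueField_quotient hx hx2 hreg)
    choose g hg using fun i ↦ Ideal.Quotient.mk_surjective (f i)
    refine ⟨inferInstance, m + 1, Fin.cons x g, ?_, ?_⟩
    -- `x` and lifts of generators of the maximal ideal of `R / x` generate that of `R`
    · have hmap : (Ideal.span (Set.range g)).map (Ideal.Quotient.mk (Ideal.span {x})) =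
          maximalIdeal (R ⧸ Ideal.span {x}) := by
        rw [Ideal.map_span, ← Set.range_comp, ← hf]
        congr 2
        exact funext hg
      have := congrArg (Ideal.comap (Ideal.Quotient.mk (Ideal.span {x}))) hmap
      rw [Ideal.comap_map_of_surjective _ Ideal.Quotient.mk_surjective, ← RingHom.ker_eq_comap_bot,
        Ideal.mk_ker] at this
      rw [Fin.range_cons, Ideal.span_insert, sup_comm, this]
      refine le_antisymm (le_maximalIdeal (Ideal.comap_ne_top _ (maximalIdeal.isMaximal _).ne_top))
        fun r hr ↦ ?_
      rw [Ideal.mem_comap, mem_maximalIdeal, mem_nonunits_iff]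
      intro hu
      obtain ⟨t, ht⟩ := Ideal.Quotient.mk_surjective hu.unit⁻¹.val
      have h1 : Ideal.Quotient.mk (Ideal.span {x}) (r * t - 1) = 0 := by
        rw [map_sub, map_mul, ht, map_one, IsUnit.mul_val_inv, sub_self]
      rw [Ideal.Quotient.eq_zero_iff_mem] at h1
      have h2 := (Ideal.span_singleton_le_iff_mem _).2 hx h1
      have h3 := sub_mem (Ideal.mul_mem_right t _ hr) h2
      rw [sub_sub_cancel] at h3
      exact (Ideal.ne_top_iff_one _).1 (maximalIdeal.isMaximal R).ne_top h3
    · rw [← hdim, hfd]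
      norm_cast

/-! ### Finite free resolutions and the vanishing of Tor -/

section tor

/-- Finitely generated `R`-modules. Bundling lets the syzygies be defined by recursion. -/
abbrev FinMod (R : Type) [CommRing R] := {K : ModuleCat.{0} R // Module.Finite R K}

variable {R : Type} [CommRing R]

/-- The number of generators in a chosen finite generating family of `K`; it need not be minimal. -/
noncomputable def rk (K : FinMod R) : ℕ :=
  haveI := K.2
  (Module.Finite.exists_fin' R K.1).choose

/-- A chosen surjection onto `K` from a finite free module. -/
noncomputable def cover (K : FinMod R) : (Fin (rk K) → R) →ₗ[R] K.1 :=
  haveI := K.2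
  (Module.Finite.exists_fin' R K.1).choose_spec.choose

lemma cover_surjective (K : FinMod R) : Surjective (cover K) :=
  haveI := K.2
  (Module.Finite.exists_fin' R K.1).choose_spec.choose_spec

variable [IsNoetherianRing R]

/-- The `n`-th syzygy of `K`, with `syz K 0 = K` and `syz K (n + 1)` the kernel of the chosen cover of
`syz K n`. -/
noncomputable def syz (K : FinMod R) : ℕ → FinMod R
  | 0 => K
  | n + 1 => ⟨ModuleCat.of R (LinearMap.ker (cover (syz K n))),
      inferInstanceAs (Module.Finite R (LinearMap.ker (cover (syz K n))))⟩

/-- The inclusion of the `(n + 1)`-st syzygy in the free module covering the `n`-th one. -/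
noncomputable def incl (K : FinMod R) (n : ℕ) :
    (syz K (n + 1)).1 →ₗ[R] (Fin (rk (syz K n)) → R) :=
  (LinearMap.ker (cover (syz K n))).subtype

lemma incl_injective (K : FinMod R) (n : ℕ) : Injective (incl K n) :=
  Submodule.subtype_injective _

lemma exact_incl_cover (K : FinMod R) (n : ℕ) : Exact (incl K n) (cover (syz K n)) :=
  LinearMap.exact_subtype_ker_map _

/-- The differential of the free resolution: cover the next syzygy, then include it. -/
noncomputable def diff (K : FinMod R) (n : ℕ) :
    ModuleCat.of R (Fin (rk (syz K (n + 1))) → R) ⟶ ModuleCat.of R (Fin (rk (syz K n)) → R) :=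
  ModuleCat.ofHom (incl K n ∘ₗ cover (syz K (n + 1)))

lemma exact_diff_cover (K : FinMod R) (n : ℕ) : Exact (diff K n) (cover (syz K n)) := by
  intro x
  rw [exact_incl_cover K n x]
  constructor
  · rintro ⟨y, rfl⟩
    obtain ⟨z, rfl⟩ := cover_surjective _ y
    exact ⟨z, rfl⟩
  · rintro ⟨z, rfl⟩
    exact ⟨_, rfl⟩

lemma exact_diff_diff (K : FinMod R) (n : ℕ) : Exact (diff K (n + 1)) (diff K n) := by
  intro x
  rw [← exact_diff_cover K (n + 1) x]
  change incl K n _ = 0 ↔ _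
  exact map_eq_zero_iff _ (incl_injective K n)

/-- The complex of finite free modules built from the syzygies of `K`. -/
noncomputable def resComplex (K : FinMod R) : ChainComplex (ModuleCat.{0} R) ℕ :=
  ChainComplex.of (fun n ↦ ModuleCat.of R (Fin (rk (syz K n)) → R)) (diff K) (fun n ↦ by
    ext1
    exact LinearMap.ext fun x ↦ (exact_diff_diff K n).apply_apply_eq_zero x)

lemma resComplex_d (K : FinMod R) (n : ℕ) : (resComplex K).d (n + 1) n = diff K n :=
  ChainComplex.of_d (fun n ↦ ModuleCat.of R (Fin (rk (syz K n)) → R)) (diff K) n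

lemma resComplex_exactAt (K : FinMod R) (n : ℕ) : (resComplex K).ExactAt (n + 1) := by
  rw [HomologicalComplex.exactAt_iff' _ (n + 1 + 1) (n + 1) n (by simp) (by simp),
    ShortComplex.moduleCat_exact_iff]
  intro x hx
  change (resComplex K).d (n + 1) n x = 0 at hx
  change ∃ y, (resComplex K).d (n + 1 + 1) (n + 1) y = x
  rw [resComplex_d] at hx ⊢
  exact (exact_diff_diff K n x).1 hx

/-- The augmentation of `resComplex K`, given by `cover K` in degree zero. -/
noncomputable def resAug (K : FinMod R) :
    resComplex K ⟶ (ChainComplex.single₀ (ModuleCat.{0} R)).obj K.1 :=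
  (ChainComplex.toSingle₀Equiv _ _).symm ⟨ModuleCat.ofHom (cover K), by
    rw [resComplex_d]
    ext1
    exact LinearMap.ext fun x ↦ (exact_diff_cover K 0).apply_apply_eq_zero x⟩

lemma resAug_f_zero (K : FinMod R) : (resAug K).f 0 = ModuleCat.ofHom (cover K) :=
  ChainComplex.toSingle₀Equiv_symm_apply_f_zero _ _

/-- `resComplex K` as a projective resolution of `K`. -/
noncomputable def res (K : FinMod R) : ProjectiveResolution K.1 where
  complex := resComplex K
  projective n := by
    change Projective (ModuleCat.of R (Fin (rk (syz K n)) → R))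
    infer_instance
  π := resAug K
  quasiIso := ⟨fun n => by
    cases n
    · rw [ChainComplex.quasiIsoAt₀_iff, ShortComplex.quasiIso_iff_of_zeros']
      · refine (ShortComplex.exact_and_epi_g_iff_of_iso ?_).2
          (⟨?_, (ModuleCat.epi_iff_surjective _).2 (cover_surjective K)⟩ :
          (ShortComplex.mk (diff K 0) (ModuleCat.ofHom (cover K)) ?_).Exact ∧ Epi _)
        · exact ShortComplex.isoMk (Iso.refl _) (Iso.refl _) (Iso.refl _)
            ((Category.id_comp _).trans
              ((Category.comp_id _).trans (resComplex_d K 0)).symm)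
            ((Category.id_comp _).trans ((Category.comp_id ((resAug K).f 0)).trans
              (resAug_f_zero K)).symm)
        · ext1
          exact LinearMap.ext fun x ↦ (exact_diff_cover K 0).apply_apply_eq_zero x
        · rw [ShortComplex.moduleCat_exact_iff]
          intro x hx
          exact (exact_diff_cover K 0 x).1 hx
      all_goals rfl
    · rw [quasiIsoAt_iff_exactAt']
      · apply resComplex_exactAt
      · apply ChainComplex.exactAt_succ_single_obj⟩

/-- The vanishing of `Tor_{n+1}(N, K)` is exactness of `N ⊗ P` in degree `n + 1`. -/
lemma lTensor_exact_of_tor (K : FinMod R) (N : ModuleCat.{0} R) (n : ℕ)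
    (h : Limits.IsZero (((Tor (ModuleCat R) (n + 1)).obj N).obj K.1)) :
    Exact ((diff K (n + 1)).hom.lTensor N) ((diff K n).hom.lTensor N) := by
  have h1 := h.of_iso ((res K).isoLeftDerivedObj
    ((MonoidalCategory.tensoringLeft (ModuleCat R)).obj N) (n + 1)).symm
  have h2 := (HomologicalComplex.exactAt_iff_isZero_homology _ _).2 h1
  rw [HomologicalComplex.exactAt_iff' _ (n + 1 + 1) (n + 1) n (by simp) (by simp),
    ShortComplex.ShortExact.moduleCat_exact_iff_function_exact] at h2
  have h3 : Exact
      (((MonoidalCategory.tensoringLeft (ModuleCat R)).obj N).map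
        ((resComplex K).d (n + 1 + 1) (n + 1))).hom
      (((MonoidalCategory.tensoringLeft (ModuleCat R)).obj N).map
        ((resComplex K).d (n + 1) n)).hom := h2
  rw [resComplex_d, resComplex_d] at h3
  exact h3

lemma lTensor_incl_injective (K : FinMod R) (N : ModuleCat.{0} R) (n : ℕ)
    (h : Limits.IsZero (((Tor (ModuleCat R) (n + 1)).obj N).obj K.1)) :
    Injective ((incl K n).lTensor N) := by
  have hex := lTensor_exact_of_tor K N n h
  rw [injective_iff_map_eq_zero]
  intro y hy
  obtain ⟨z, rfl⟩ := LinearMap.lTensor_surjective N (cover_surjective (syz K (n + 1))) y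
  obtain ⟨w, rfl⟩ := (hex z).1 ((LinearMap.lTensor_comp_apply N _ _ z).trans hy)
  rw [← LinearMap.lTensor_comp_apply,
    (exact_diff_cover K (n + 1)).linearMap_comp_eq_zero, LinearMap.lTensor_zero]
  rfl

variable [IsLocalRing R]

/-- Vanishing of a single `Tor_{n+1}(k, M)` makes the `n`-th syzygy of `M` free. -/
lemma exists_pdLT_of_tor (M : Type) [AddCommGroup M] [Module R M] [Module.Finite R M] (n : ℕ)
    (h : Limits.IsZero (((Tor (ModuleCat R) (n + 1)).obj
      (ModuleCat.of R (ResidueField R))).obj (ModuleCat.of R M))) :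
    ∃ d, PdLT R M d := by
  let K : FinMod R := ⟨ModuleCat.of R M, inferInstanceAs (Module.Finite R M)⟩
  have h1 : Injective ((incl K n).lTensor (ResidueField R)) :=
    lTensor_incl_injective K (ModuleCat.of R (ResidueField R)) n h
  have hfree : Module.Free R (syz K n).1 := by
    have := (syz K (n + 1)).2
    exact Module.free_of_lTensor_residueField_injective _ _ (cover_surjective _)
      (exact_incl_cover K n) h1
  -- descend from the free `n`-th syzygy to `syz K 0 = M`
  have key : ∀ i j, i + j = n → PdLT R (syz K j).1 (i + 1) := by
    intro i
    induction i with
    | zero =>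
      rintro j hj
      obtain rfl : j = n := by omega
      exact pdLT_one_iff.2 inferInstance
    | succ i ih =>
      intro j hj
      exact PdLT.right (incl_injective K j) (exact_incl_cover K j) (cover_surjective _)
        (ih (j + 1) (by omega)) ((pdLT_one_iff.2 inferInstance).mono (by omega))
  exact ⟨_, key n 0 (by omega)⟩

end tor

/-! ### Restriction of scalars along powers of Frobenius -/

section twist

/-- Change of rings: `pd_R M ≤ pd_S M + pd_R S`, for `S` local so that finitely generated projective
`S`-modules are free. -/
lemma PdLT.restrict {R S : Type} [CommRing R] [CommRing S] [IsLocalRing S] [IsNoetherianRing S]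
    [Module R S] [IsScalarTower R S S] {a : ℕ} (ha : PdLT R S a) (n : ℕ)
    (M : Type) [AddCommGroup M] [Module S M] [Module R M] [IsScalarTower R S M]
    [Module.Finite S M] (h : PdLT S M (n + 1)) : PdLT R M (n + a) := by
  induction n generalizing M with
  | zero =>
    have := pdLT_one_iff.1 h
    have : Module.Free S M := Module.free_of_flat_of_isLocalRing
    let b := Module.finBasis S M
    rw [zero_add]
    exact (ha.pi _).of_equiv (b.equivFun.symm.restrictScalars R)
  | succ n ih =>
    obtain ⟨m, f, hf⟩ := Module.Finite.exists_fin' S M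
    have h1 := ih (LinearMap.ker f) (PdLT.ker hf h)
    have h2 : PdLT R M (n + a + 1) :=
      PdLT.right (f := (LinearMap.ker f).subtype.restrictScalars R) (g := f.restrictScalars R)
        (Submodule.subtype_injective _) f.exact_subtype_ker_map hf h1
        ((ha.pi m).mono (by omega))
    exact h2.mono (by omega)

/-- The restriction of scalars of an `S`-module `M` along a ring homomorphism `R →+* S`. A type
synonym is needed because for `R = S` the module `M` carries two actions of the same ring. -/
def Twist {R S : Type} [CommRing R] [CommRing S] (_ : R →+* S) (M : Type) : Type := M

variable {R S : Type} [CommRing R] [CommRing S] (φ : R →+* S)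

instance (M : Type) [AddCommGroup M] : AddCommGroup (Twist φ M) :=
  inferInstanceAs (AddCommGroup M)

instance (M : Type) [AddCommGroup M] [Module S M] : Module R (Twist φ M) := Module.compHom M φ

/-- The identity of `M`, seen as an additive equivalence to its restriction of scalars. -/
def Twist.of (M : Type) [AddCommGroup M] : M ≃+ Twist φ M := AddEquiv.refl M

lemma Twist.smul_of {M : Type} [AddCommGroup M] [Module S M] (r : R) (m : M) :
    r • Twist.of φ M m = Twist.of φ M (φ r • m) := rfl

lemma Twist.finite_and_pdLT [IsLocalRing S] [IsNoetherianRing S]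
    [hfin : Module.Finite R (Twist φ S)] {a : ℕ} (ha : PdLT R (Twist φ S) a)
    (M : Type) [AddCommGroup M] [Module S M] [Module.Finite S M] {n : ℕ} (h : PdLT S M n) :
    Module.Finite R (Twist φ M) ∧ PdLT R (Twist φ M) (n + a) := by
  let _ : Module R S := Module.compHom S φ
  let _ : Module R M := Module.compHom M φ
  have _ : IsScalarTower R S S := ⟨fun r s t ↦ mul_assoc (φ r) s t⟩
  have _ : IsScalarTower R S M := ⟨fun r s t ↦ mul_smul (φ r) s t⟩
  have _ : Module.Finite R S := hfin
  refine ⟨(Module.Finite.trans S M : Module.Finite R M), ?_⟩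
  exact PdLT.restrict (R := R) (S := S) ha n M (h.mono (Nat.le_succ n))

/-- If `R` has finite projective dimension over itself through the finite map `F`, then restriction
of scalars along `F^e` preserves finite projective dimension of finitely generated modules. -/
lemma exists_frobenius_power {R : Type} [CommRing R] [IsLocalRing R] [IsNoetherianRing R]
    (p : ℕ) [Fact p.Prime] [CharP R p] [Module.Finite R (Twist (frobenius R p) R)]
    {a : ℕ} (ha : PdLT R (Twist (frobenius R p) R) a) (e : ℕ) :
    ∃ ψ : R →+* R, (∀ x, ψ x = x ^ p ^ e) ∧
      ∀ (M : Type) [AddCommGroup M] [Module R M] [Module.Finite R M], (∃ n, PdLT R M n) →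
        ∃ n, PdLT R (Twist ψ M) n := by
  induction e with
  | zero => exact ⟨RingHom.id R, fun x ↦ by simp, fun M _ _ _ ⟨n, hn⟩ ↦ ⟨n, hn.of_equiv
      (N := Twist (RingHom.id R) M) { AddEquiv.refl M with map_smul' := fun _ _ ↦ rfl }⟩⟩
  | succ e ih =>
    obtain ⟨ψ, hψ, H⟩ := ih
    refine ⟨(frobenius R p).comp ψ, fun x ↦ ?_, fun M _ _ _ ⟨n, hn⟩ ↦ ?_⟩
    · rw [RingHom.comp_apply, hψ, frobenius_def, ← pow_mul, pow_succ]
    -- restricting along `F ∘ ψ` is restricting along `F`, then along `ψ`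
    · obtain ⟨_, h2⟩ := Twist.finite_and_pdLT (frobenius R p) ha M hn
      exact H (Twist (frobenius R p) M) ⟨_, h2⟩

variable [IsLocalRing R]

/-- When `ψ` raises to the `q`-th power with `e ≤ q`, the submodule `m • Twist ψ M` lies in `m ^ e M`,
so a socle element of `M` outside `m ^ e M` spans a summand `k` of `Twist ψ M`. -/
lemma exists_retract_twist {q e : ℕ} (ψ : R →+* R) (hψ : ∀ x, ψ x = x ^ q) (hq : e ≤ q)
    (hq0 : q ≠ 0)
    {M : Type} [AddCommGroup M] [Module R M] (y : M) (hy : ∀ r ∈ maximalIdeal R, r • y = 0)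
    (hy' : y ∉ maximalIdeal R ^ e • (⊤ : Submodule R M)) :
    ∃ (i : ResidueField R →ₗ[R] Twist ψ M) (r : Twist ψ M →ₗ[R] ResidueField R),
      r ∘ₗ i = LinearMap.id := by
  refine exists_retract (Twist.of ψ M y) (fun r hr ↦ ?_) fun hmem ↦ hy' ?_
  · rw [Twist.smul_of, hψ, hy _ (Ideal.pow_mem_of_mem _ hr _ (Nat.pos_of_ne_zero hq0)), map_zero]
  · suffices h : ∀ z ∈ maximalIdeal R • (⊤ : Submodule R (Twist ψ M)),
        (Twist.of ψ M).symm z ∈ maximalIdeal R ^ e • (⊤ : Submodule R M) from h _ hmem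
    intro z hz
    induction hz using Submodule.smul_induction_on' with
    | smul r hr m _ =>
      obtain ⟨m, rfl⟩ := (Twist.of ψ M).surjective m
      rw [Twist.smul_of, AddEquiv.symm_apply_apply, hψ]
      exact Submodule.smul_mem_smul (Ideal.pow_le_pow_right hq (Ideal.pow_mem_pow hr q)) trivial
    | add a _ b _ ha hb => rw [map_add]; exact Submodule.add_mem _ ha hb

end twist

/-! ### A cyclic module of finite projective dimension and depth zero -/

/-- Some quotient `R ⧸ I` of finite projective dimension has a nonzero socle element; take `I`
maximal among proper ideals whose quotient has finite projective dimension. -/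
lemma exists_quotient_socle {R : Type} [CommRing R] [IsLocalRing R] [IsNoetherianRing R] :
    ∃ (I : Ideal R) (n : ℕ) (y : R ⧸ I), PdLT R (R ⧸ I) n ∧ y ≠ 0 ∧
      ∀ r ∈ maximalIdeal R, r • y = 0 := by
  obtain ⟨I, ⟨hI, n, hn⟩, hmax⟩ := set_has_maximal_iff_noetherian.2 ‹IsNoetherianRing R›
    {I : Ideal R | I ≠ ⊤ ∧ ∃ n, PdLT R (R ⧸ I) n}
    ⟨⊥, bot_ne_top, 1, (pdLT_one_iff.2 inferInstance : PdLT R R 1).of_equiv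
      (Submodule.quotEquivOfEqBot ⊥ rfl).symm⟩
  refine ⟨I, n, ?_⟩
  by_contra! H
  have hne : (1 : R ⧸ I) ≠ 0 := fun h ↦ hI ((Ideal.eq_top_iff_one I).2
    (Ideal.Quotient.eq_zero_iff_mem.1 h))
  have hs : ∀ s : R ⧸ I, (∀ r ∈ maximalIdeal R, r • s = 0) → s = 0 := fun s hs ↦ by
    by_contra h0
    obtain ⟨r, hr, hrs⟩ := H s hn h0
    exact hrs (hs r hr)
  have hJ : ¬ maximalIdeal R ≤ I := fun hle ↦ hne (hs 1 fun r hr ↦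
    Ideal.Quotient.eq_zero_iff_mem.2 (Ideal.mul_mem_right 1 I (hle hr)))
  obtain ⟨x, hx, hxI, hreg⟩ := exists_regular I hJ hs
  refine hmax (I ⊔ Ideal.span {x}) ⟨?_, n + 1, ?_⟩ (left_lt_sup.2 fun h ↦ hxI
    (h (Ideal.mem_span_singleton_self x)))
  · exact ((sup_le (le_maximalIdeal hI) ((Ideal.span_singleton_le_iff_mem _).2 hx)).trans_lt
      (maximalIdeal.isMaximal R).ne_top.lt_top).ne
  -- the sequence `0 → R ⧸ I → R ⧸ I → R ⧸ (I + (x)) → 0` given by multiplication by `x`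
  · refine PdLT.right (f := LinearMap.lsmul R (R ⧸ I) x)
      (g := Submodule.factor (le_sup_left : I ≤ I ⊔ Ideal.span {x})) hreg ?_
      (Submodule.factor_surjective _) hn (hn.mono (Nat.le_succ n))
    intro z
    obtain ⟨a, rfl⟩ := Submodule.Quotient.mk_surjective _ z
    change Submodule.Quotient.mk a = 0 ↔ ∃ b : R ⧸ I, x • b = _
    rw [Submodule.Quotient.mk_eq_zero]
    constructor
    · intro ha
      obtain ⟨i, hi, b, hb, rfl⟩ := Submodule.mem_sup.1 ha
      obtain ⟨c, rfl⟩ := Ideal.mem_span_singleton'.1 hb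
      refine ⟨Submodule.Quotient.mk c, ?_⟩
      rw [← Submodule.Quotient.mk_smul, Submodule.Quotient.eq, smul_eq_mul, mul_comm]
      simpa using hi
    · rintro ⟨b, hb⟩
      obtain ⟨c, rfl⟩ := Submodule.Quotient.mk_surjective _ b
      rw [← Submodule.Quotient.mk_smul, Submodule.Quotient.eq] at hb
      have := (I ⊔ Ideal.span {x}).sub_mem
        ((le_sup_right : _ ≤ I ⊔ Ideal.span {x}) (Ideal.mem_span_singleton'.2 ⟨c, mul_comm c x⟩))
        ((le_sup_left : I ≤ I ⊔ Ideal.span {x}) hb)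
      simpa using this

/-- It is enough that a single `Tor_{N+1}(k, R_F)` vanishes. -/
theorem isRegularLocal_of_frobenius (R : Type) [CommRing R] [IsNoetherianRing R] [IsLocalRing R]
    (p : ℕ) [Fact p.Prime] [CharP R p] [Module.Finite R (Twist (frobenius R p) R)] (N : ℕ)
    (htor : Limits.IsZero (((Tor (ModuleCat R) (N + 1)).obj
      (ModuleCat.of R (ResidueField R))).obj (ModuleCat.of R (Twist (frobenius R p) R)))) :
    IsRegularLocal R := by
  obtain ⟨a, ha⟩ := exists_pdLT_of_tor _ N htor
  obtain ⟨I, n, y, hn, hy0, hy⟩ := exists_quotient_socle (R := R)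
  -- Krull's intersection theorem
  obtain ⟨e, he⟩ : ∃ e, y ∉ maximalIdeal R ^ e • (⊤ : Submodule R (R ⧸ I)) := by
    by_contra! H
    have h1 := Ideal.iInf_pow_smul_eq_bot_of_isLocalRing (M := R ⧸ I) (maximalIdeal R)
      (maximalIdeal.isMaximal R).ne_top
    exact hy0 ((Submodule.mem_bot R).1 (h1 ▸ (Submodule.mem_iInf _).2 H))
  have hp : p.Prime := Fact.out
  obtain ⟨ψ, hψ, H⟩ := exists_frobenius_power p ha e
  obtain ⟨i, r, hri⟩ := exists_retract_twist ψ hψ (Nat.lt_pow_self hp.one_lt).le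
    (pow_ne_zero e hp.ne_zero) y hy he
  obtain ⟨m, hm⟩ := H (R ⧸ I) ⟨n, hn⟩
  obtain ⟨d, hd⟩ : ∃ d : ℕ, ringKrullDim R + 1 ≤ d := by
    obtain ⟨d, hd⟩ := WithBot.ne_bot_iff_exists.1 (ringKrullDim_ne_bot (R := R))
    have htop : d ≠ ⊤ := fun h ↦ ringKrullDim_ne_top (R := R) (by rw [← hd, h]; rfl)
    lift d to ℕ using htop
    exact ⟨d + 1, by rw [← hd]; rfl⟩
  exact isRegularLocal_of_pdLT d R m hd (hm.of_retract i r hri)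

end KR

/-- Kunz–Rodicio: let `(R, m, k)` be a Noetherian local ring of prime characteristic `p`
with F-finite Frobenius `F : r ↦ r^p`. If `R` viewed as an `R`-module via `F` has finite
flat dimension, then `R` is regular. -/
theorem stmt9 (R : Type) [CommRing R] [IsNoetherianRing R] [IsLocalRing R]
    (p : ℕ) [Fact p.Prime] [CharP R p]
    (hFfin : @Module.Finite R R _ _ (Module.compHom _ (frobenius R p)))
    -- `R_F` has finite flat dimension: `Tor^R_i(-, R_F)` vanishes for `i` large
    (hffd : ∃ n : ℕ, ∀ (N : ModuleCat R) (i : ℕ), n ≤ i →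
      Limits.IsZero (((Tor (ModuleCat R) i).obj N).obj
        (@ModuleCat.of R _ R _ (Module.compHom _ (frobenius R p))))) :
    IsRegularLocal R := by
  have _ : Module.Finite R (KR.Twist (frobenius R p) R) := hFfin
  obtain ⟨N, hN⟩ := hffd
  exact KR.isRegularLocal_of_frobenius R p N
    (hN (ModuleCat.of R (IsLocalRing.ResidueField R)) (N + 1) (Nat.le_succ N))
end
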